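/- arXiv:2008.10044 — 2 statements merged into one kernel-verified Lean document; each statement's English description precedes it below -/
import Mathlib

section
/- Let A be an artin algebra with minimal injective cogenerator Q. Assume pd Q = d < ∞ and id(A as a left A-module) = d' < ∞. Then fin-pro A = fin-inj A = Fin-pro A = Fin-inj A = del A = des A = d = d'. -/
open CategoryTheory CategoryTheory.Limits

noncomputable section

namespace ArtinAlg

variable (A : Type) [Ring A]

/-- `M` admits a projective resolution of length at most `n`. -/
inductive ProjDimLE : ℕ → ModuleCat.{0} A → Prop
  | zero (M : ModuleCat.{0} A) (h : Projective M) : ProjDimLE 0 M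
  | succ (n : ℕ) (M P : ModuleCat.{0} A) (f : P ⟶ M) (hP : Projective P) (hf : Epi f)
      (h : ProjDimLE n (kernel f)) : ProjDimLE (n + 1) M

/-- `M` admits an injective coresolution of length at most `n`. -/
inductive InjDimLE : ℕ → ModuleCat.{0} A → Prop
  | zero (M : ModuleCat.{0} A) (h : Injective M) : InjDimLE 0 M
  | succ (n : ℕ) (M I : ModuleCat.{0} A) (f : M ⟶ I) (hI : Injective I) (hf : Mono f)
      (h : InjDimLE n (cokernel f)) : InjDimLE (n + 1) M

/-- The projective dimension `pd M ∈ ℕ∞`. -/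
def projDim (M : ModuleCat.{0} A) : ℕ∞ :=
  sInf {d : ℕ∞ | ∃ n : ℕ, d = n ∧ ProjDimLE A n M}

/-- The injective dimension `id M ∈ ℕ∞`. -/
def injDim (M : ModuleCat.{0} A) : ℕ∞ :=
  sInf {d : ℕ∞ | ∃ n : ℕ, d = n ∧ InjDimLE A n M}

/-- `f : P ⟶ M` is a projective cover: `P` is projective and `f` is an essential
(superfluous) epimorphism. -/
def IsProjectiveCoverHom {P M : ModuleCat.{0} A} (f : P ⟶ M) : Prop :=
  Projective P ∧ Epi f ∧ ∀ (N : ModuleCat.{0} A) (g : N ⟶ P), Epi (g ≫ f) → Epi g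

/-- `P` is a projective cover of `M`. -/
def IsProjCoverOf (M P : ModuleCat.{0} A) : Prop :=
  ∃ f : P ⟶ M, IsProjectiveCoverHom A f

/-- `f : M ⟶ I` is an injective envelope: `I` is injective and `f` is an essential
monomorphism. -/
def IsInjectiveEnvelopeHom {M I : ModuleCat.{0} A} (f : M ⟶ I) : Prop :=
  Injective I ∧ Mono f ∧ ∀ (N : ModuleCat.{0} A) (g : I ⟶ N), Mono (f ≫ g) → Mono g

/-- `I` is an injective envelope of `M`. -/
def IsInjEnvOf (M I : ModuleCat.{0} A) : Prop :=
  ∃ f : M ⟶ I, IsInjectiveEnvelopeHom A f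

/-- `X ≅ Ω M`, the kernel of a projective cover of `M`. -/
def IsSyzygyOf (M X : ModuleCat.{0} A) : Prop :=
  ∃ (P : ModuleCat.{0} A) (f : P ⟶ M), IsProjectiveCoverHom A f ∧ Nonempty (X ≅ kernel f)

/-- `X ≅ Σ M`, the cokernel of an injective envelope of `M`. -/
def IsCosyzygyOf (M X : ModuleCat.{0} A) : Prop :=
  ∃ (I : ModuleCat.{0} A) (f : M ⟶ I), IsInjectiveEnvelopeHom A f ∧ Nonempty (X ≅ cokernel f)

/-- `X ≅ Ω^n M`. -/
def IsNthSyzygy : ℕ → ModuleCat.{0} A → ModuleCat.{0} A → Prop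
  | 0, M, X => Nonempty (X ≅ M)
  | n + 1, M, X => ∃ Y, IsSyzygyOf A M Y ∧ IsNthSyzygy n Y X

/-- `X ≅ Σ^n M`. -/
def IsNthCosyzygy : ℕ → ModuleCat.{0} A → ModuleCat.{0} A → Prop
  | 0, M, X => Nonempty (X ≅ M)
  | n + 1, M, X => ∃ Y, IsCosyzygyOf A M Y ∧ IsNthCosyzygy n Y X

/-- `X` is a direct summand of `Y`. -/
def IsDirectSummandOf (X Y : ModuleCat.{0} A) : Prop :=
  ∃ (i : X ⟶ Y) (r : Y ⟶ X), i ≫ r = 𝟙 X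

/-- `X ∈ add W` : `X` is a direct summand of a finite direct sum of copies of `W`. -/
def InAdd (X W : ModuleCat.{0} A) : Prop :=
  ∃ n : ℕ, IsDirectSummandOf A X (ModuleCat.of A (Fin n → ↥W))

/-- The delooping level of `M` is at most `d` :
`Ω^d M ∈ add (A ⊕ Ω^{d+1} M')` for some finitely generated `M'`. -/
def DelLE (d : ℕ) (M : ModuleCat.{0} A) : Prop :=
  ∃ X, IsNthSyzygy A d M X ∧
    ∃ M' : ModuleCat.{0} A, Module.Finite A ↥M' ∧
      ∃ X', IsNthSyzygy A (d + 1) M' X' ∧ InAdd A X (ModuleCat.of A (A × ↥X'))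

/-- The delooping level `del M ∈ ℕ∞`. -/
def delLevel (M : ModuleCat.{0} A) : ℕ∞ :=
  sInf {d : ℕ∞ | ∃ n : ℕ, d = n ∧ DelLE A n M}

/-- The delooping level of the algebra: the supremum of `del S` over the simple modules. -/
def delAlg : ℕ∞ :=
  sSup {d : ℕ∞ | ∃ S : ModuleCat.{0} A, IsSimpleModule A ↥S ∧ delLevel A S = d}

/-- `Q` is a minimal injective cogenerator: the injective envelope of the direct sum of
a complete set of representatives of the simple modules. -/
def IsMinimalInjectiveCogenerator (Q : ModuleCat.{0} A) : Prop :=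
  ∃ (ι : Type) (_ : Fintype ι) (S : ι → ModuleCat.{0} A),
    (∀ i, IsSimpleModule A ↥(S i)) ∧
    (∀ T : ModuleCat.{0} A, IsSimpleModule A ↥T → ∃! i, Nonempty (↥T ≃ₗ[A] ↥(S i))) ∧
    IsInjEnvOf A (ModuleCat.of A (∀ i, ↥(S i))) Q

/-- The desuspending level of `M` is at most `d` :
`Σ^d M ∈ add (D(A) ⊕ Σ^{d+1} M')` for some finitely generated `M'`. -/
def DesLE (d : ℕ) (M : ModuleCat.{0} A) : Prop :=
  ∃ X, IsNthCosyzygy A d M X ∧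
    ∃ Q, IsMinimalInjectiveCogenerator A Q ∧
      ∃ M' : ModuleCat.{0} A, Module.Finite A ↥M' ∧
        ∃ X', IsNthCosyzygy A (d + 1) M' X' ∧ InAdd A X (ModuleCat.of A (↥Q × ↥X'))

/-- The desuspending level `des M ∈ ℕ∞`. -/
def desLevel (M : ModuleCat.{0} A) : ℕ∞ :=
  sInf {d : ℕ∞ | ∃ n : ℕ, d = n ∧ DesLE A n M}

/-- The desuspending level of the algebra. -/
def desAlg : ℕ∞ :=
  sSup {d : ℕ∞ | ∃ S : ModuleCat.{0} A, IsSimpleModule A ↥S ∧ desLevel A S = d}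

/-- The (small) finitistic projective dimension `fin-pro A`. -/
def finProDim : ℕ∞ :=
  sSup {d : ℕ∞ | ∃ M : ModuleCat.{0} A, Module.Finite A ↥M ∧ projDim A M = d ∧ d ≠ ⊤}

/-- The (small) finitistic injective dimension `fin-inj A`. -/
def finInjDim : ℕ∞ :=
  sSup {d : ℕ∞ | ∃ M : ModuleCat.{0} A, Module.Finite A ↥M ∧ injDim A M = d ∧ d ≠ ⊤}

/-- The big finitistic projective dimension `Fin-pro A`. -/
def bigFinProDim : ℕ∞ :=
  sSup {d : ℕ∞ | ∃ M : ModuleCat.{0} A, projDim A M = d ∧ d ≠ ⊤}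

/-- The big finitistic injective dimension `Fin-inj A`. -/
def bigFinInjDim : ℕ∞ :=
  sSup {d : ℕ∞ | ∃ M : ModuleCat.{0} A, injDim A M = d ∧ d ≠ ⊤}

/-- `M` is an indecomposable nonzero module. -/
def Indec (M : ModuleCat.{0} A) : Prop :=
  Nontrivial ↥M ∧ ∀ (N₁ N₂ : Submodule A ↥M), IsCompl N₁ N₂ → N₁ = ⊥ ∨ N₂ = ⊥

/-- `M` is serial (uniserial): its submodules form a chain. -/
def IsUniserial (M : ModuleCat.{0} A) : Prop :=
  ∀ N₁ N₂ : Submodule A ↥M, N₁ ≤ N₂ ∨ N₂ ≤ N₁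

/-- `A` is a Nakayama algebra: all finitely generated indecomposable modules are serial. -/
def IsNakayama : Prop :=
  ∀ M : ModuleCat.{0} A, Module.Finite A ↥M → Indec A M → IsUniserial A M

/-- `A` is connected: it is not a nontrivial product of algebras. -/
def IsConnectedAlgebra : Prop :=
  Nontrivial A ∧ ∀ e : A, IsIdempotentElem e → e ∈ Set.center A → e = 0 ∨ e = 1

/-- `A` is a cyclic Nakayama algebra: connected Nakayama with no simple projective module. -/
def IsCyclicNakayama : Prop :=
  IsNakayama A ∧ IsConnectedAlgebra A ∧
    ¬ ∃ S : ModuleCat.{0} A, IsSimpleModule A ↥S ∧ Projective S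

/-- `T ≅ top M` (and `top M` is simple): there is an essential epimorphism `M ⟶ T`. -/
def IsSimpleTopOf (M T : ModuleCat.{0} A) : Prop :=
  IsSimpleModule A ↥T ∧
    ∃ f : M ⟶ T, Epi f ∧ ∀ (N : ModuleCat.{0} A) (g : N ⟶ M), Epi (g ≫ f) → Epi g

/-- `S ≅ soc M` (and `soc M` is simple): there is an essential monomorphism `S ⟶ M`. -/
def IsSimpleSocOf (M S : ModuleCat.{0} A) : Prop :=
  IsSimpleModule A ↥S ∧
    ∃ f : S ⟶ M, Mono f ∧ ∀ (N : ModuleCat.{0} A) (g : M ⟶ N), Mono (f ≫ g) → Mono g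

/-- `0 ⟶ N ⟶ E ⟶ M ⟶ 0` is an almost split (Auslander-Reiten) sequence. -/
def IsAlmostSplitSeq {N E M : ModuleCat.{0} A} (f : N ⟶ E) (g : E ⟶ M) : Prop :=
  Mono f ∧ Epi g ∧ (∃ w : f ≫ g = 0, (ShortComplex.mk f g w).Exact) ∧
  (¬ ∃ s : M ⟶ E, s ≫ g = 𝟙 M) ∧ Indec A N ∧ Indec A M ∧
  ∀ (X : ModuleCat.{0} A) (h : X ⟶ M), (¬ ∃ s : M ⟶ X, s ≫ h = 𝟙 M) → ∃ h' : X ⟶ E, h' ≫ g = h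

/-- `N ≅ τ M`, the Auslander-Reiten translate of `M` : there is an almost split sequence
`0 ⟶ N ⟶ E ⟶ M ⟶ 0`. -/
def IsTauOf (N M : ModuleCat.{0} A) : Prop :=
  ∃ (E : ModuleCat.{0} A) (f : N ⟶ E) (g : E ⟶ M), IsAlmostSplitSeq A f g

/-- `U ≅ ψ S = τ⁻ top (I S)`. -/
def IsPsiOf (S U : ModuleCat.{0} A) : Prop :=
  ∃ I, IsInjEnvOf A S I ∧ ∃ T, IsSimpleTopOf A I T ∧ IsTauOf A T U

/-- `T ≅ γ S = τ soc (P S)`. -/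
def IsGammaOf (S T : ModuleCat.{0} A) : Prop :=
  ∃ P, IsProjCoverOf A S P ∧ ∃ U, IsSimpleSocOf A P U ∧ IsTauOf A T U

/-- `T ≅ φ S = top (I S)`. -/
def IsPhiOf (S T : ModuleCat.{0} A) : Prop :=
  ∃ I, IsInjEnvOf A S I ∧ IsSimpleTopOf A I T

/-- There is a `ψ`-path `(S_1, …, S_m)` of cardinality `m` ending in `S`. -/
def PsiPathTo (m : ℕ) (S : ModuleCat.{0} A) : Prop :=
  1 ≤ m ∧ ∃ c : ℕ → ModuleCat.{0} A,
    (∀ i < m, IsSimpleModule A ↥(c i)) ∧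
    (∀ i, i + 1 < m → IsPsiOf A (c i) (c (i + 1))) ∧
    Nonempty (c (m - 1) ≅ S)

/-- `a(S)`: the supremum of the cardinalities of `ψ`-paths ending in `S`. -/
def aVal (S : ModuleCat.{0} A) : ℕ∞ :=
  sSup {d : ℕ∞ | ∃ m : ℕ, d = m ∧ PsiPathTo A m S}

/-- `a(A)`: the maximum of `a(S)` over the simple modules which are not `ψ`-cyclic. -/
def aAlg : ℕ∞ :=
  sSup {d : ℕ∞ | ∃ S : ModuleCat.{0} A, IsSimpleModule A ↥S ∧ aVal A S ≠ ⊤ ∧ aVal A S = d}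

/-- `S` is a composition factor of `M`: a simple subquotient of `M`. -/
def IsCompFactorOf (S M : ModuleCat.{0} A) : Prop :=
  IsSimpleModule A ↥S ∧ ∃ N' N : Submodule A ↥M, N' ≤ N ∧
    Nonempty ((↥N ⧸ N'.comap N.subtype) ≃ₗ[A] ↥S)

/-- `e(S) = min {pd S, pd (I S)} = x`. -/
def ERelVal (S : ModuleCat.{0} A) (x : ℕ∞) : Prop :=
  ∃ I, IsInjEnvOf A S I ∧ x = min (projDim A S) (projDim A I)

/-- `e*(S) = min {id S, id (P S)} = x`. -/
def EStarVal (S : ModuleCat.{0} A) (x : ℕ∞) : Prop :=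
  ∃ P, IsProjCoverOf A S P ∧ x = min (injDim A S) (injDim A P)

/-- `T = h(S) = top (Ω^{e(S)} N S)`, the homological permutation. -/
def HRel (S T : ModuleCat.{0} A) : Prop :=
  IsSimpleModule A ↥S ∧ IsSimpleModule A ↥T ∧
  ∃ z : ℕ, ERelVal A S z ∧
    ∃ N, ((Odd z ∧ N = S) ∨ (Even z ∧ IsInjEnvOf A S N)) ∧
      ∃ X, IsNthSyzygy A z N X ∧ IsSimpleTopOf A X T

/-- `S = h*(T) = soc (Σ^{e*(T)} N* T)`, the inverse homological permutation. -/
def HStarRel (T S : ModuleCat.{0} A) : Prop :=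
  IsSimpleModule A ↥T ∧ IsSimpleModule A ↥S ∧
  ∃ z : ℕ, EStarVal A T z ∧
    ∃ N, ((Odd z ∧ N = T) ∨ (Even z ∧ IsProjCoverOf A T N)) ∧
      ∃ X, IsNthCosyzygy A z N X ∧ IsSimpleSocOf A X S

/-- The `t`-fold relational iterate of a relation on modules (up to isomorphism). -/
def IterRel (r : ModuleCat.{0} A → ModuleCat.{0} A → Prop) :
    ℕ → ModuleCat.{0} A → ModuleCat.{0} A → Prop
  | 0, X, Y => Nonempty (X ≅ Y)
  | n + 1, X, Y => ∃ Z, r X Z ∧ IterRel r n Z Y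

end ArtinAlg

namespace ArtinAux

section Abstract

variable {C : Type*} [Category C] [Abelian C] (F : C → Prop)

/-- `X` is an `n`-th (not necessarily minimal) syzygy of `M`. -/
def PSyz : ℕ → C → C → Prop
  | 0, M, X => Nonempty (X ≅ M)
  | n + 1, M, X => ∃ (Y P : C) (i : Y ⟶ P) (p : P ⟶ M) (w : i ≫ p = 0),
      (ShortComplex.mk i p w).ShortExact ∧ Projective P ∧ F P ∧ PSyz n Y X

/-- `X` is stably (modulo projectives in `F`) a direct summand of `Y`. -/
def Stab (X Y : C) : Prop :=
  ∃ (P : C) (_ : F P) (_ : Projective P) (a : X ⟶ Y) (r : Y ⟶ X) (s : X ⟶ P) (t : P ⟶ X),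
    a ≫ r + s ≫ t = 𝟙 X

variable {F}

lemma PSyz.congr {n : ℕ} {M M' X X' : C} (h : PSyz F n M X) (e : M ≅ M') (e' : X ≅ X') :
    PSyz F n M' X' := by
  induction n generalizing M M' with
  | zero => exact ⟨e'.symm ≪≫ h.some ≪≫ e⟩
  | succ n ih =>
    obtain ⟨Y, P, i, p, w, hS, hP, hF, h⟩ := h
    refine ⟨Y, P, i, p ≫ e.hom, by rw [reassoc_of% w, zero_comp], ?_, hP, hF, ih h (Iso.refl _)⟩
    refine ShortComplex.shortExact_of_iso (S₁ := ShortComplex.mk i p w)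
      (ShortComplex.isoMk (Iso.refl _) (Iso.refl _) e ?_ ?_) hS <;> simp

lemma Stab.congr {X Y X' Y' : C} (h : Stab F X Y) (e : X ≅ X') (e' : Y ≅ Y') : Stab F X' Y' := by
  obtain ⟨P, hF, hP, a, r, s, t, h⟩ := h
  refine ⟨P, hF, hP, e.inv ≫ a ≫ e'.hom, e'.inv ≫ r ≫ e.hom, e.inv ≫ s, t ≫ e.hom, ?_⟩
  have : e.inv ≫ (a ≫ r + s ≫ t) ≫ e.hom = 𝟙 _ := by rw [h]; simp
  simpa using this

/-- A stable version of Schanuel's lemma. -/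
lemma schanuel {X Y X' Y' P P' : C} {i : X' ⟶ P} {p : P ⟶ X} {i' : Y' ⟶ P'} {p' : P' ⟶ Y}
    {w : i ≫ p = 0} {w' : i' ≫ p' = 0}
    (h : (ShortComplex.mk i p w).ShortExact) (h' : (ShortComplex.mk i' p' w').ShortExact)
    (hP : Projective P) (hP' : Projective P') (hF : F P)
    (H : Stab F X Y) : Stab F X' Y' := by
  obtain ⟨P'', hF'', hP'', a, r, s, t, e⟩ := H
  have := h.epi_g; have := h'.epi_g; have := h.mono_f; have := h'.mono_f
  dsimp at *
  obtain ⟨t', ht⟩ : ∃ t' : P'' ⟶ P, t' ≫ p = t := ⟨_, Projective.factorThru_comp t p⟩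
  obtain ⟨α, hα⟩ : ∃ α : P ⟶ P', α ≫ p' = p ≫ a := ⟨_, Projective.factorThru_comp (p ≫ a) p'⟩
  obtain ⟨β, hβ⟩ : ∃ β : P' ⟶ P, β ≫ p = p' ≫ r := ⟨_, Projective.factorThru_comp (p' ≫ r) p⟩
  obtain ⟨α', hα'⟩ : ∃ α' : X' ⟶ Y', α' ≫ i' = i ≫ α :=
    ⟨_, h'.exact.lift_f (i ≫ α) (by dsimp; rw [Category.assoc, hα, reassoc_of% w, zero_comp])⟩
  obtain ⟨β', hβ'⟩ : ∃ β' : Y' ⟶ X', β' ≫ i = i' ≫ β :=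
    ⟨_, h.exact.lift_f (i' ≫ β) (by dsimp; rw [Category.assoc, hβ, reassoc_of% w', zero_comp])⟩
  obtain ⟨k, hk⟩ : ∃ k : P ⟶ X', k ≫ i = 𝟙 P - α ≫ β - p ≫ s ≫ t' :=
    ⟨_, h.exact.lift_f (𝟙 P - α ≫ β - p ≫ s ≫ t') (by
      dsimp
      have h3 : p ≫ (a ≫ r + s ≫ t) = p := by rw [e, Category.comp_id]
      simp only [Preadditive.comp_add] at h3
      simp only [Preadditive.sub_comp, Category.assoc, hβ, reassoc_of% hα, ht, Category.id_comp]
      rw [sub_sub, h3, sub_self])⟩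
  refine ⟨P, hF, hP, α', β', i, k, ?_⟩
  rw [← cancel_mono i]
  simp only [Preadditive.add_comp, Category.assoc, hβ', reassoc_of% hα', hk, Preadditive.comp_sub,
    reassoc_of% w, zero_comp, Category.comp_id, Category.id_comp]
  abel

lemma Stab.refl {X : C} {P : C} (hF : F P) (hP : Projective P) : Stab F X X :=
  ⟨P, hF, hP, 𝟙 X, 𝟙 X, 0, 0, by simp⟩

/-- Horseshoe lemma. -/
lemma horseshoe {S : ShortComplex C} (hS : S.ShortExact) {Y Y' P P' : C}
    {i : Y ⟶ P} {p : P ⟶ S.X₁} {i' : Y' ⟶ P'} {p' : P' ⟶ S.X₃}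
    {w : i ≫ p = 0} {w' : i' ≫ p' = 0}
    (h : (ShortComplex.mk i p w).ShortExact) (h' : (ShortComplex.mk i' p' w').ShortExact)
    (hP : Projective P) (hP' : Projective P') :
    ∃ (T : ShortComplex C) (_ : T.ShortExact) (q : P ⊞ P' ⟶ S.X₂) (j : T.X₂ ⟶ P ⊞ P')
      (w : j ≫ q = 0), (ShortComplex.mk j q w).ShortExact ∧ Nonempty (Y ≅ T.X₁) ∧
        Nonempty (Y' ≅ T.X₃) := by
  have := hS.epi_g; have := hS.mono_f
  have hp : Epi p := h.epi_g
  have hp' : Epi p' := h'.epi_g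
  have hi : Mono i := h.mono_f
  have hi' : Mono i' := h'.mono_f
  obtain ⟨l, hl⟩ : ∃ l : P' ⟶ S.X₂, l ≫ S.g = p' := ⟨_, Projective.factorThru_comp p' S.g⟩
  let M : ShortComplex C := ShortComplex.mk (biprod.inl : P ⟶ P ⊞ P') biprod.snd (by simp)
  have hM : M.ShortExact := (ShortComplex.Splitting.ofHasBinaryBiproduct P P').shortExact
  let v : M ⟶ S :=
    { τ₁ := p
      τ₂ := biprod.desc (p ≫ S.f) l
      τ₃ := p'
      comm₁₂ := by simp [M]
      comm₂₃ := by
        dsimp [M]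
        ext <;> simp [hl] }
  have := hM.epi_g; have := hM.mono_f
  have : Epi v.τ₁ := hp
  have : Epi v.τ₃ := hp'
  have : Epi v.τ₂ := ShortComplex.epi_of_epi_of_epi_of_epi v hS.exact hM.epi_g hp hp'
  let D : ShortComplex.SnakeInput C :=
    { L₀ := kernel v
      L₁ := M
      L₂ := S
      L₃ := cokernel v
      v₀₁ := kernel.ι v
      v₁₂ := v
      v₂₃ := cokernel.π v
      w₀₂ := kernel.condition v
      w₁₃ := cokernel.condition v
      h₀ := kernelIsKernel v
      h₃ := cokernelIsCokernel v
      L₁_exact := hM.exact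
      epi_L₁_g := hM.epi_g
      L₂_exact := hS.exact
      mono_L₂_f := hS.mono_f }
  have hz : IsZero D.L₃.X₁ := by
    have hz : D.v₂₃.τ₁ = 0 := by
      rw [← cancel_epi v.τ₁, comp_zero]
      exact D.w₁₃_τ₁
    have : Epi D.v₂₃.τ₁ := D.epi_v₂₃_τ₁
    rw [IsZero.iff_id_eq_zero, ← cancel_epi D.v₂₃.τ₁, hz, zero_comp, zero_comp]
  have : Epi D.L₀.g := D.L₁'_exact.epi_f (hz.eq_of_tgt _ _)
  have : Mono D.L₁.f := hM.mono_f
  have : Mono D.L₀.f := D.mono_L₀_f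
  refine ⟨D.L₀, { exact := D.L₀_exact }, v.τ₂, D.v₀₁.τ₂, D.w₀₂_τ₂,
    { exact := D.exact_C₂_up, mono_f := D.mono_v₀₁_τ₂, epi_g := ‹Epi v.τ₂› },
    ⟨?_⟩, ⟨?_⟩⟩
  · exact IsLimit.conePointUniqueUpToIso h.fIsKernel D.h₀τ₁
  · exact IsLimit.conePointUniqueUpToIso h'.fIsKernel D.h₀τ₃

/-- If `0 → S → I → Z → 0` is exact and `pd I ≤ n`, then `Ω^n S` is a stable summand
of `Ω^{n+1} Z`. -/
theorem main_stab (hFker : ∀ S : ShortComplex C, S.ShortExact → F S.X₂ → F S.X₁)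
    (hFsum : ∀ X Y : C, F X → F Y → F (X ⊞ Y)) (n : ℕ) (S : ShortComplex C) (hS : S.ShortExact)
    (hI : F S.X₂) (hpd : HasProjectiveDimensionLT S.X₂ (n + 1)) {X X' : C}
    (hX : PSyz F n S.X₁ X) (hX' : PSyz F (n + 1) S.X₃ X') : Stab F X X' := by
  induction n generalizing S X X' with
  | zero =>
    obtain ⟨Y, P, i, p, w, h, hP, hF, ⟨e⟩⟩ := hX'
    have : Projective S.X₂ := projective_iff_hasProjectiveDimensionLT_one.2 hpd
    have hS' : (ShortComplex.mk S.f S.g S.zero).ShortExact := hS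
    exact (schanuel hS' h this hP hI (Stab.refl hF hP)).congr hX.some.symm e.symm
  | succ n ih =>
    obtain ⟨Y, P, i, p, w, h, hP, hF, hY⟩ := hX
    obtain ⟨Y', P', i', p', w', h', hP', hF', hY'⟩ := hX'
    obtain ⟨T, hT, q, j, wq, hK, ⟨e⟩, ⟨e'⟩⟩ := horseshoe hS h h' hP hP'
    refine ih T hT (hFker _ hK (hFsum _ _ hF hF')) ?_ (hY.congr e (Iso.refl _))
      (hY'.congr e' (Iso.refl _))
    exact hK.hasProjectiveDimensionLT_X₁ (n + 1) (by dsimp; infer_instance) hpd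

end Abstract
end ArtinAux

namespace ArtinAux

open CategoryTheory.Abelian

section ExtVanishing

universe w v u
variable {C : Type u} [Category.{v} C] [Abelian C] [HasExt.{w} C]

/-- Vanishing of `Ext^n(X, Y)`. -/
def EZ (X Y : C) (n : ℕ) : Prop := ∀ e : Ext.{w} X Y n, e = 0

lemma EZ.contra₁ {S : ShortComplex C} (hS : S.ShortExact) {Y : C} {n : ℕ}
    (h₂ : EZ.{w} S.X₂ Y n) (h₃ : EZ.{w} S.X₃ Y (n + 1)) : EZ.{w} S.X₁ Y n := fun e => by
  obtain ⟨x, rfl⟩ := Ext.contravariant_sequence_exact₁ hS Y e (add_comm 1 n) (h₃ _)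
  rw [h₂ x, Ext.comp_zero]

lemma EZ.contra₂ {S : ShortComplex C} (hS : S.ShortExact) {Y : C} {n : ℕ}
    (h₁ : EZ.{w} S.X₁ Y n) (h₃ : EZ.{w} S.X₃ Y n) : EZ.{w} S.X₂ Y n := fun e => by
  obtain ⟨x, rfl⟩ := Ext.contravariant_sequence_exact₂ hS Y e (h₁ _)
  rw [h₃ x, Ext.comp_zero]

lemma EZ.contra₃ {S : ShortComplex C} (hS : S.ShortExact) {Y : C} {n : ℕ}
    (h₁ : EZ.{w} S.X₁ Y n) (h₂ : EZ.{w} S.X₂ Y (n + 1)) : EZ.{w} S.X₃ Y (n + 1) := fun e => by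
  obtain ⟨x, rfl⟩ := Ext.contravariant_sequence_exact₃ hS Y e (h₂ _) (add_comm 1 n)
  rw [h₁ x, Ext.comp_zero]

lemma EZ.co₁ {S : ShortComplex C} (hS : S.ShortExact) {X : C} {n : ℕ}
    (h₃ : EZ.{w} X S.X₃ n) (h₂ : EZ.{w} X S.X₂ (n + 1)) : EZ.{w} X S.X₁ (n + 1) := fun e => by
  obtain ⟨x, rfl⟩ := Ext.covariant_sequence_exact₁ X hS e (h₂ _) rfl
  rw [h₃ x, Ext.zero_comp]

lemma EZ.co₂ {S : ShortComplex C} (hS : S.ShortExact) {X : C} {n : ℕ}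
    (h₁ : EZ.{w} X S.X₁ n) (h₃ : EZ.{w} X S.X₃ n) : EZ.{w} X S.X₂ n := fun e => by
  obtain ⟨x, rfl⟩ := Ext.covariant_sequence_exact₂ X hS e (h₃ _)
  rw [h₁ x, Ext.zero_comp]

lemma EZ.co₃ {S : ShortComplex C} (hS : S.ShortExact) {X : C} {n : ℕ}
    (h₁ : EZ.{w} X S.X₁ (n + 1)) (h₂ : EZ.{w} X S.X₂ n) : EZ.{w} X S.X₃ n := fun e => by
  obtain ⟨x, rfl⟩ := Ext.covariant_sequence_exact₃ X hS e rfl (h₁ _)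
  rw [h₂ x, Ext.zero_comp]

lemma EZ.of_sum_left {X Y N : C} {n : ℕ} {ι : Type*} [Fintype ι] (f : ι → (X ⟶ Y))
    (g : ι → (Y ⟶ X)) (h : ∑ i, f i ≫ g i = 𝟙 X) (hY : EZ.{w} Y N n) : EZ.{w} X N n :=
  fun e => by
  have h1 : (Ext.mk₀ (𝟙 X)).comp e (zero_add n) = e := Ext.mk₀_id_comp e
  rw [← h1, ← h, Ext.mk₀_sum, Ext.sum_comp]
  refine Finset.sum_eq_zero fun i _ => ?_
  rw [← Ext.mk₀_comp_mk₀, Ext.comp_assoc_of_second_deg_zero, hY (Ext.comp _ _ _), Ext.comp_zero]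

lemma EZ.of_sum_right {X Y N : C} {n : ℕ} {ι : Type*} [Fintype ι] (f : ι → (X ⟶ Y))
    (g : ι → (Y ⟶ X)) (h : ∑ i, f i ≫ g i = 𝟙 X) (hY : EZ.{w} N Y n) : EZ.{w} N X n :=
  fun e => by
  have h1 : e.comp (Ext.mk₀ (𝟙 X)) (add_zero n) = e := Ext.comp_mk₀_id e
  rw [← h1, ← h, Ext.mk₀_sum, Ext.comp_sum]
  refine Finset.sum_eq_zero fun i _ => ?_
  rw [← Ext.mk₀_comp_mk₀, ← Ext.comp_assoc_of_second_deg_zero, hY (Ext.comp _ _ _), Ext.zero_comp]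

lemma EZ.of_iso_left {X Y N : C} {n : ℕ} (e : X ≅ Y) (hY : EZ.{w} Y N n) : EZ.{w} X N n :=
  EZ.of_sum_left (fun _ : Unit => e.hom) (fun _ => e.inv) (by simp) hY

lemma EZ.of_iso_right {X Y N : C} {n : ℕ} (e : X ≅ Y) (hY : EZ.{w} N Y n) : EZ.{w} N X n :=
  EZ.of_sum_right (fun _ : Unit => e.hom) (fun _ => e.inv) (by simp) hY

lemma EZ.of_projective {X Y : C} {n : ℕ} (h : Projective X) : EZ.{w} X Y (n + 1) :=
  fun e => e.eq_zero_of_projective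

lemma EZ.of_injective {X Y : C} {n : ℕ} (h : Injective Y) : EZ.{w} X Y (n + 1) :=
  fun e => e.eq_zero_of_injective

lemma EZ.of_pd {X Y : C} {n m : ℕ} (h : HasProjectiveDimensionLT X n) (hm : n ≤ m) :
    EZ.{w} X Y m :=
  fun e => e.eq_zero_of_hasProjectiveDimensionLT n hm

lemma EZ.of_id {X Y : C} {n m : ℕ} (h : HasInjectiveDimensionLT Y n) (hm : n ≤ m) :
    EZ.{w} X Y m :=
  fun e => e.eq_zero_of_hasInjectiveDimensionLT n hm

end ExtVanishing

lemma shortExact_kernel {C : Type*} [Category C] [Abelian C] {X Y : C} (f : X ⟶ Y) [Epi f] :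
    (ShortComplex.mk (kernel.ι f) f (kernel.condition f)).ShortExact :=
  { exact := ShortComplex.exact_kernel f }

lemma shortExact_cokernel {C : Type*} [Category C] [Abelian C] {X Y : C} (f : X ⟶ Y) [Mono f] :
    (ShortComplex.mk f (cokernel.π f) (cokernel.condition f)).ShortExact :=
  { exact := ShortComplex.exact_cokernel f }


section Dim
open ArtinAlg

variable {A : Type} [Ring A]

lemma projDimLE_iff (n : ℕ) (M : ModuleCat.{0} A) :
    ProjDimLE A n M ↔ HasProjectiveDimensionLT M (n + 1) := by
  induction n generalizing M with
  | zero =>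
    rw [← projective_iff_hasProjectiveDimensionLT_one]
    exact ⟨fun h => by cases h; assumption, ProjDimLE.zero M⟩
  | succ n ih =>
    constructor
    · intro h
      cases h with
      | succ _ _ P f hP hf h =>
        exact ((shortExact_kernel f).hasProjectiveDimensionLT_X₃_iff n hP).2 ((ih _).1 h)
    · intro h
      refine ProjDimLE.succ n M (Projective.over M) (Projective.π M) inferInstance inferInstance
        ((ih _).2 ?_)
      exact ((shortExact_kernel (Projective.π M)).hasProjectiveDimensionLT_X₃_iff n
        (by dsimp; infer_instance)).1 h

lemma injDimLE_iff (n : ℕ) (M : ModuleCat.{0} A) :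
    InjDimLE A n M ↔ HasInjectiveDimensionLT M (n + 1) := by
  induction n generalizing M with
  | zero =>
    rw [← injective_iff_hasInjectiveDimensionLT_one]
    exact ⟨fun h => by cases h; assumption, InjDimLE.zero M⟩
  | succ n ih =>
    constructor
    · intro h
      cases h with
      | succ _ _ P f hP hf h =>
        exact ((shortExact_cokernel f).hasInjectiveDimensionLT_X₃_iff n hP).1 ((ih _).1 h)
    · intro h
      refine InjDimLE.succ n M (Injective.under M) (Injective.ι M) inferInstance inferInstance
        ((ih _).2 ?_)
      exact ((shortExact_cokernel (Injective.ι M)).hasInjectiveDimensionLT_X₃_iff n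
        (by dsimp; infer_instance)).2 h

lemma sInf_level_le {p : ℕ → Prop} {n : ℕ} (h : p n) :
    sInf {d : ℕ∞ | ∃ n : ℕ, d = n ∧ p n} ≤ n := sInf_le ⟨n, rfl, h⟩

lemma exists_of_sInf_level {p : ℕ → Prop} {n : ℕ}
    (h : sInf {d : ℕ∞ | ∃ n : ℕ, d = n ∧ p n} = n) : p n := by
  have hne : {d : ℕ∞ | ∃ n : ℕ, d = n ∧ p n}.Nonempty := by
    by_contra hne
    rw [Set.not_nonempty_iff_eq_empty] at hne
    rw [hne, sInf_empty] at h
    exact ENat.natCast_ne_top n h.symm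
  obtain ⟨m, hm, hp⟩ := csInf_mem hne
  rw [h] at hm
  rwa [Nat.cast_inj.1 hm]

lemma projDim_le_iff (n : ℕ) (M : ModuleCat.{0} A) :
    projDim A M ≤ n ↔ HasProjectiveDimensionLT M (n + 1) := by
  constructor
  · intro h
    obtain ⟨m, hm⟩ := ENat.ne_top_iff_exists.1 (ne_top_of_le_ne_top (ENat.natCast_ne_top n) h)
    have := (projDimLE_iff m M).1 (exists_of_sInf_level hm.symm)
    rw [← hm] at h
    exact hasProjectiveDimensionLT_of_ge M (m + 1) (n + 1) (by have := Nat.cast_le.1 h; omega)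
  · intro h
    exact sInf_level_le ((projDimLE_iff n M).2 h)

lemma injDim_le_iff (n : ℕ) (M : ModuleCat.{0} A) :
    injDim A M ≤ n ↔ HasInjectiveDimensionLT M (n + 1) := by
  constructor
  · intro h
    obtain ⟨m, hm⟩ := ENat.ne_top_iff_exists.1 (ne_top_of_le_ne_top (ENat.natCast_ne_top n) h)
    have := (injDimLE_iff m M).1 (exists_of_sInf_level hm.symm)
    rw [← hm] at h
    exact hasInjectiveDimensionLT_of_ge M (m + 1) (n + 1) (by have := Nat.cast_le.1 h; omega)
  · intro h
    exact sInf_level_le ((injDimLE_iff n M).2 h)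

/-- Dimension shifting along syzygies. -/
lemma EZ_syzygy {n : ℕ} {M X N : ModuleCat.{0} A} (h : IsNthSyzygy A n M X) (k : ℕ) :
    EZ.{0} M N (n + (k + 1)) ↔ EZ.{0} X N (k + 1) := by
  induction n generalizing M with
  | zero =>
    rw [Nat.zero_add]
    exact ⟨fun h' => h'.of_iso_left h.some, fun h' => h'.of_iso_left h.some.symm⟩
  | succ n ih =>
    obtain ⟨Y, ⟨P, f, ⟨hP, hf, -⟩, ⟨e⟩⟩, hY⟩ := h
    rw [← ih hY, show n + 1 + (k + 1) = n + (k + 1) + 1 by omega]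
    have hS := shortExact_kernel f
    constructor
    · intro h'
      exact (EZ.contra₁ hS (EZ.of_projective hP) h').of_iso_left e
    · intro h'
      exact EZ.contra₃ hS (h'.of_iso_left e.symm) (EZ.of_projective hP)

/-- Dimension shifting along cosyzygies. -/
lemma EZ_cosyzygy {n : ℕ} {M X N : ModuleCat.{0} A} (h : IsNthCosyzygy A n M X) (k : ℕ) :
    EZ.{0} N M (n + (k + 1)) ↔ EZ.{0} N X (k + 1) := by
  induction n generalizing M with
  | zero =>
    rw [Nat.zero_add]
    exact ⟨fun h' => h'.of_iso_right h.some, fun h' => h'.of_iso_right h.some.symm⟩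
  | succ n ih =>
    obtain ⟨Y, ⟨P, f, ⟨hP, hf, -⟩, ⟨e⟩⟩, hY⟩ := h
    rw [← ih hY, show n + 1 + (k + 1) = n + (k + 1) + 1 by omega]
    have hS := shortExact_cokernel f
    constructor
    · intro h'
      exact (EZ.co₃ hS h' (EZ.of_injective hP)).of_iso_right e
    · intro h'
      exact EZ.co₁ hS (h'.of_iso_right e.symm) (EZ.of_injective hP)

end Dim
end ArtinAux

namespace ArtinAux

open CategoryTheory.Abelian

lemma extend_of_EZ {C : Type*} [Category C] [Abelian C] [HasExt C] {S : ShortComplex C}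
    (hS : S.ShortExact) {Y : C} (h : EZ S.X₃ Y 1) (φ : S.X₁ ⟶ Y) :
    ∃ ψ : S.X₂ ⟶ Y, S.f ≫ ψ = φ := by
  obtain ⟨x, hx⟩ := Ext.contravariant_sequence_exact₁ hS Y (Ext.mk₀ φ) (add_zero 1) (h _)
  obtain ⟨ψ, rfl⟩ := Ext.homEquiv₀.symm.surjective x
  exact ⟨ψ, Ext.homEquiv₀.symm.injective (by simpa using hx)⟩

section Crit
variable {A : Type} [Ring A]

lemma extend_all [IsSemiprimaryRing A] {K P : Type} [AddCommGroup K] [AddCommGroup P] [Module A K]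
    [Module A P] [Module.Projective A K] [Module.Projective A P] (i : K →ₗ[A] P)
    (h : ∀ φ : K →ₗ[A] A, ∃ ψ : P →ₗ[A] A, ψ ∘ₗ i = φ) (N : Type) [AddCommGroup N] [Module A N] :
    ∀ φ : K →ₗ[A] N, ∃ ψ : P →ₗ[A] N, ψ ∘ₗ i = φ := by
  have h1 : ∀ φ : K →ₗ[A] (A ⧸ Ring.jacobson A), ∃ ψ : P →ₗ[A] (A ⧸ Ring.jacobson A),
      ψ ∘ₗ i = φ := by
    intro φ
    obtain ⟨φ', rfl⟩ := Module.projective_lifting_property (Ring.jacobson A).mkQ φ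
      (Submodule.mkQ_surjective _)
    obtain ⟨ψ, rfl⟩ := h φ'
    exact ⟨(Ring.jacobson A).mkQ ∘ₗ ψ, rfl⟩
  have h2 : ∀ (I : Type) (φ : K →ₗ[A] (I → A ⧸ Ring.jacobson A)),
      ∃ ψ : P →ₗ[A] (I → A ⧸ Ring.jacobson A), ψ ∘ₗ i = φ := by
    intro I φ
    choose ψ hψ using fun j : I => h1 (LinearMap.proj j ∘ₗ φ)
    refine ⟨LinearMap.pi ψ, ?_⟩
    ext x j
    exact LinearMap.congr_fun (hψ j) x
  refine IsSemiprimaryRing.induction ℤ A N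
    (P := fun N _ _ _ => ∀ φ : K →ₗ[A] N, ∃ ψ : P →ₗ[A] N, ψ ∘ₗ i = φ) ?_ ?_
  · intro N _ _ _ _ _ hN φ
    let _ := hN.module
    have : IsScalarTower A (A ⧸ Ring.jacobson A) N := hN.isScalarTower
    have := Module.projective_of_isSemisimpleRing (A ⧸ Ring.jacobson A) N
    obtain ⟨s, hs⟩ := Module.Projective.out (R := A ⧸ Ring.jacobson A) (P := N)
    let f : N →ₗ[A ⧸ Ring.jacobson A] (N → A ⧸ Ring.jacobson A) := Finsupp.lcoeFun ∘ₗ s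
    have hf : Function.Injective f := DFunLike.coe_injective.comp hs.injective
    obtain ⟨g, hg⟩ := IsSemisimpleModule.extension_property f hf LinearMap.id
    obtain ⟨ψ, hψ⟩ := h2 N (f.restrictScalars A ∘ₗ φ)
    refine ⟨g.restrictScalars A ∘ₗ ψ, ?_⟩
    rw [LinearMap.comp_assoc, hψ]
    ext x
    exact LinearMap.congr_fun hg (φ x)
  · intro N _ _ _ _ J hJ hq φ
    obtain ⟨ψ₁, h₁⟩ := hq (J.mkQ ∘ₗ φ)
    obtain ⟨ψ₂, rfl⟩ := Module.projective_lifting_property J.mkQ ψ₁ (Submodule.mkQ_surjective _)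
    obtain ⟨ψ₃, h₃⟩ := hJ ((φ - ψ₂ ∘ₗ i).codRestrict J (fun x => by
      rw [← Submodule.Quotient.mk_eq_zero]
      have := LinearMap.congr_fun h₁ x
      simp only [LinearMap.comp_apply, Submodule.mkQ_apply] at this
      simp [this]))
    refine ⟨J.subtype ∘ₗ ψ₃ + ψ₂, ?_⟩
    ext x
    have := congrArg Subtype.val (LinearMap.congr_fun h₃ x)
    simp only [LinearMap.comp_apply, LinearMap.codRestrict_apply, LinearMap.sub_apply] at this
    simp [this]

/-- If `pd M ≤ n + 1` and `Ext^{n+1}(M, A) = 0`, then `pd M ≤ n`. -/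
theorem pdcrit [IsSemiprimaryRing A] (n : ℕ) (M : ModuleCat.{0} A)
    (h : HasProjectiveDimensionLT M (n + 2)) (hE : EZ.{0} M (ModuleCat.of A A) (n + 1)) :
    HasProjectiveDimensionLT M (n + 1) := by
  induction n generalizing M with
  | zero =>
    have hS := shortExact_kernel (Projective.π M)
    have hK : Projective (kernel (Projective.π M)) :=
      projective_iff_hasProjectiveDimensionLT_one.2
        ((hS.hasProjectiveDimensionLT_X₃_iff 0 (by dsimp; infer_instance)).1 h)
    have hP : Projective (Projective.over M) := inferInstance
    have : Module.Projective A (kernel (Projective.π M) : ModuleCat.{0} A) := inferInstance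
    have : Module.Projective A (Projective.over M : ModuleCat.{0} A) := inferInstance
    obtain ⟨ψ, hψ⟩ := extend_all (kernel.ι (Projective.π M)).hom (fun φ => by
      obtain ⟨ψ, hψ⟩ := extend_of_EZ hS hE (ModuleCat.ofHom φ)
      exact ⟨ψ.hom, by simpa using congrArg ModuleCat.Hom.hom hψ⟩) _ LinearMap.id
    have hsplit := ShortComplex.Splitting.ofExactOfRetraction _ hS.exact (ModuleCat.ofHom ψ)
      (by ext x; exact LinearMap.congr_fun hψ x) hS.epi_g
    have : Projective M := Projective.of_iso (Iso.refl M) (by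
      refine ⟨fun {E X} f e _ => ?_⟩
      refine ⟨hsplit.s ≫ Projective.factorThru (Projective.π M ≫ f) e, ?_⟩
      have := hsplit.s_g
      dsimp at this
      simp [reassoc_of% this])
    infer_instance
  | succ n ih =>
    have hS := shortExact_kernel (Projective.π M)
    have hP : Projective (Projective.over M) := inferInstance
    rw [hS.hasProjectiveDimensionLT_X₃_iff _ hP] at h
    rw [hS.hasProjectiveDimensionLT_X₃_iff _ hP]
    exact ih _ h (EZ.contra₁ hS (EZ.of_projective hP) hE)

lemma shortExact_sub {Y : Type} [AddCommGroup Y] [Module A Y] (N : Submodule A Y) :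
    (ShortComplex.mk (ModuleCat.ofHom N.subtype) (ModuleCat.ofHom N.mkQ)
      (by ext x; simp)).ShortExact :=
  ModuleCat.shortComplex_shortExact _ (LinearMap.exact_subtype_mkQ N) N.injective_subtype
    N.mkQ_surjective

lemma EZ_of_simple_left [IsArtinianRing A] {M : ModuleCat.{0} A} {n : ℕ}
    (h : ∀ S : ModuleCat.{0} A, IsSimpleModule A S → EZ.{0} S M n) (X : ModuleCat.{0} A)
    [hX : Module.Finite A X] : EZ.{0} X M n := by
  have hl : IsFiniteLength A X := ((IsArtinianRing.tfae A X).out 0 3).1 hX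
  suffices ∀ (Y : Type) [AddCommGroup Y] [Module A Y] (_ : IsFiniteLength A Y),
      EZ.{0} (ModuleCat.of A Y) M n from this X hl
  intro Y _ _ hY
  induction hY with
  | of_subsingleton =>
    rename_i Y _ _ _
    exact EZ.of_pd (ModuleCat.isZero_of_subsingleton
      (ModuleCat.of A Y)).hasProjectiveDimensionLT_zero (Nat.zero_le _)
  | of_simple_quotient hN ih =>
    rename_i Y _ _ N _
    exact EZ.contra₂ (shortExact_sub N) ih (h _ ‹_›)

lemma EZ_of_simple_right [IsArtinianRing A] {M : ModuleCat.{0} A} {n : ℕ}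
    (h : ∀ S : ModuleCat.{0} A, IsSimpleModule A S → EZ.{0} M S n) (X : ModuleCat.{0} A)
    [hX : Module.Finite A X] : EZ.{0} M X n := by
  have hl : IsFiniteLength A X := ((IsArtinianRing.tfae A X).out 0 3).1 hX
  suffices ∀ (Y : Type) [AddCommGroup Y] [Module A Y] (_ : IsFiniteLength A Y),
      EZ.{0} M (ModuleCat.of A Y) n from this X hl
  intro Y _ _ hY
  induction hY with
  | of_subsingleton =>
    rename_i Y _ _ _
    exact EZ.of_id (ModuleCat.isZero_of_subsingleton
      (ModuleCat.of A Y)).hasInjectiveDimensionLT_zero (Nat.zero_le _)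
  | of_simple_quotient hN ih =>
    rename_i Y _ _ N _
    exact EZ.co₂ (shortExact_sub N) ih (h _ ‹_›)

/-- If `id M ≤ n + 1` and `Ext^{n+1}(X, M) = 0` for all f.g. `X`, then `id M ≤ n`. -/
theorem idcrit' (n : ℕ) (M : ModuleCat.{0} A)
    (h : HasInjectiveDimensionLT M (n + 2))
    (hE : ∀ X : ModuleCat.{0} A, Module.Finite A X → EZ.{0} X M (n + 1)) :
    HasInjectiveDimensionLT M (n + 1) := by
  induction n generalizing M with
  | zero =>
    rw [← injective_iff_hasInjectiveDimensionLT_one]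
    refine (Module.injective_iff_injective_object A M).1 (Module.Baer.injective fun I g => ?_)
    obtain ⟨ψ, hψ⟩ := extend_of_EZ (shortExact_sub (Y := A) I) (hE _ (by dsimp; infer_instance))
      (ModuleCat.ofHom g)
    exact ⟨ψ.hom, fun x hx => LinearMap.congr_fun (congrArg ModuleCat.Hom.hom hψ) ⟨x, hx⟩⟩
  | succ n ih =>
    have hS := shortExact_cokernel (Injective.ι M)
    have hP : Injective (Injective.under M) := inferInstance
    rw [← hS.hasInjectiveDimensionLT_X₃_iff _ hP] at h
    rw [← hS.hasInjectiveDimensionLT_X₃_iff _ hP]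
    exact ih _ h fun X hX => EZ.co₃ hS (hE X hX) (EZ.of_injective hP)

theorem idcrit [IsArtinianRing A] (n : ℕ) (M : ModuleCat.{0} A)
    (h : HasInjectiveDimensionLT M (n + 2))
    (hE : ∀ S : ModuleCat.{0} A, IsSimpleModule A S → EZ.{0} S M (n + 1)) :
    HasInjectiveDimensionLT M (n + 1) :=
  idcrit' n M h fun X _ => EZ_of_simple_left hE X

/-- Finite projective dimension is bounded by the injective dimension of `A`. -/
theorem pd_bound [IsArtinianRing A] (d : ℕ)
    (hA : HasInjectiveDimensionLT (ModuleCat.of A A) (d + 1)) (n : ℕ) (M : ModuleCat.{0} A)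
    (h : HasProjectiveDimensionLT M (n + 1)) : HasProjectiveDimensionLT M (d + 1) := by
  induction n with
  | zero => exact hasProjectiveDimensionLT_of_ge M 1 _ (by omega)
  | succ n ih =>
    by_cases hn : n + 1 ≤ d
    · exact hasProjectiveDimensionLT_of_ge M (n + 1 + 1) _ (by omega)
    · exact ih (pdcrit n M h (EZ.of_id hA (by omega)))

/-- Finite injective dimension is bounded by the projective dimension of a module containing
all the simple modules. -/
theorem id_bound [IsArtinianRing A] (d : ℕ) (Q : ModuleCat.{0} A)
    (hQ : HasProjectiveDimensionLT Q (d + 1))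
    (hs : ∀ S : ModuleCat.{0} A, IsSimpleModule A S → ∃ f : S ⟶ Q, Mono f)
    (n : ℕ) (M : ModuleCat.{0} A)
    (h : HasInjectiveDimensionLT M (n + 1)) : HasInjectiveDimensionLT M (d + 1) := by
  induction n with
  | zero => exact hasInjectiveDimensionLT_of_ge M 1 _ (by omega)
  | succ n ih =>
    by_cases hn : n + 1 ≤ d
    · exact hasInjectiveDimensionLT_of_ge M (n + 1 + 1) _ (by omega)
    · refine ih (idcrit n M h fun S hS => ?_)
      obtain ⟨f, hf⟩ := hs S hS
      exact EZ.contra₁ (shortExact_cokernel f) (EZ.of_pd hQ (by omega)) (EZ.of_id h le_rfl)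

end Crit
end ArtinAux

namespace ArtinAux
open ArtinAlg

lemma finite_of_socle (R : Type) [CommRing R] [IsArtinianRing R]
    (A : Type) [Ring A] [Algebra R A] [Module.Finite R A] [IsSemiprimaryRing A]
    (Q : Type) [AddCommGroup Q] [Module A Q] (U : Submodule A Q) [Module.Finite A U]
    (hU : ∀ x : Q, (∀ a ∈ Ring.jacobson A, a • x = 0) → x ∈ U) : Module.Finite A Q := by
  let _ : Module R Q := Module.compHom Q (algebraMap R A)
  have : IsScalarTower R A Q := ⟨fun r a x => by
    rw [Algebra.smul_def, mul_smul]; rfl⟩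
  let T : ℕ → Submodule R Q := fun k => Nat.rec ⊥
    (fun _ N => ⨅ a : Ring.jacobson A, N.comap (Algebra.lsmul R R Q (a : A))) k
  have hT : ∀ k x, x ∈ T (k + 1) ↔ ∀ a ∈ Ring.jacobson A, a • x ∈ T k := by
    intro k x
    simp [T]
  have hT2 : ∀ k x, (∀ a ∈ Ring.jacobson A ^ k, a • x = 0) → x ∈ T k := by
    intro k
    induction k with
    | zero =>
      intro x hx
      simpa [T] using hx 1 (by rw [Submodule.pow_zero, Ideal.one_eq_top]; trivial)
    | succ k ih =>
      intro x hx
      rw [hT]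
      intro a ha
      refine ih _ fun b hb => ?_
      rw [← mul_smul]
      exact hx _ (by rw [Submodule.pow_succ]; exact Ideal.mul_mem_mul hb ha)
  have hfin : Module.Finite R U := Module.Finite.trans A U
  have hnoeth : IsNoetherian R U := inferInstance
  have hfgU : ∀ N : Submodule R Q, N ≤ U.restrictScalars R → N.FG := by
    intro N hN
    have : IsNoetherian R (U.restrictScalars R) := hnoeth
    exact (isNoetherian_submodule.1 this) N hN
  obtain ⟨m, j, hj⟩ : ∃ (m : ℕ) (j : Fin m → A), Submodule.span R (Set.range j) =
      (Ring.jacobson A).restrictScalars R := by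
    have : ((Ring.jacobson A).restrictScalars R).FG := IsNoetherian.noetherian _
    exact Submodule.fg_iff_exists_fin_generating_family.1 this
  have hjm : ∀ i, j i ∈ Ring.jacobson A := fun i => by
    have : j i ∈ (Ring.jacobson A).restrictScalars R := hj ▸ Submodule.subset_span ⟨i, rfl⟩
    exact this
  let φ : Q →ₗ[R] (Fin m → Q) := LinearMap.pi fun i => Algebra.lsmul R R Q (j i)
  have hfg : ∀ k, (T k).FG := by
    intro k
    induction k with
    | zero => exact Submodule.fg_bot
    | succ k ih =>
      refine Submodule.fg_of_fg_map_of_fg_inf_ker φ ?_ ?_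
      · have h1 : (Submodule.pi Set.univ fun _ : Fin m => T k).FG :=
          Submodule.fg_pi fun _ => ih
        have : IsNoetherian R (Submodule.pi Set.univ fun _ : Fin m => T k) :=
          isNoetherian_of_fg_of_noetherian _ h1
        refine (isNoetherian_submodule.1 this) _ ?_
        rintro _ ⟨x, hx, rfl⟩ i -
        exact (hT k x).1 hx _ (hjm i)
      · refine hfgU _ ?_
        rintro x ⟨-, hx⟩
        refine hU x fun a ha => ?_
        have ha' : a ∈ Submodule.span R (Set.range j) := by rw [hj]; exact ha
        induction ha' using Submodule.span_induction with
        | mem a h =>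
          obtain ⟨i, rfl⟩ := h
          exact congrFun hx i
        | zero => exact zero_smul _ _
        | add a b h1 h2 h3 h4 =>
          rw [hj] at h1 h2
          rw [add_smul, h3 h1, h4 h2, add_zero]
        | smul r a h1 h2 =>
          rw [hj] at h1
          rw [smul_assoc, h2 h1, smul_zero]
  obtain ⟨n, hn⟩ := IsSemiprimaryRing.isNilpotent (R := A)
  have htop : T n = ⊤ := by
    rw [eq_top_iff]
    intro x _
    refine hT2 n x fun a ha => ?_
    rw [hn] at ha
    rw [show a = 0 from ha, zero_smul]
  have : Module.Finite R Q := ⟨htop ▸ hfg n⟩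
  exact Module.Finite.of_restrictScalars_finite R A Q

section Q
variable {A : Type} [Ring A]

lemma Qinj {Q : ModuleCat.{0} A} (hQ : IsMinimalInjectiveCogenerator A Q) : Injective Q := by
  obtain ⟨ι, _, S, hS, hT, f, h, -⟩ := hQ
  exact h

lemma Q_simple {Q : ModuleCat.{0} A} (hQ : IsMinimalInjectiveCogenerator A Q)
    (T : ModuleCat.{0} A) (hs : IsSimpleModule A T) :
    ∃ f : T →ₗ[A] Q, Function.Injective f := by
  obtain ⟨ι, _, S, hS, hT, f, -, hf, -⟩ := hQ
  obtain ⟨i, ⟨e⟩, -⟩ := hT T hs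
  classical
  refine ⟨f.hom ∘ₗ LinearMap.single A (fun i => S i) i ∘ₗ e.toLinearMap, ?_⟩
  exact ((ModuleCat.mono_iff_injective f).1 hf).comp
    ((Pi.single_injective i).comp e.injective)

lemma Q_finite (R : Type) [CommRing R] [IsArtinianRing R] [Algebra R A] [Module.Finite R A]
    [IsArtinianRing A] {Q : ModuleCat.{0} A} (hQ : IsMinimalInjectiveCogenerator A Q) :
    Module.Finite A Q := by
  obtain ⟨ι, _, S, hS, hT, f, -, hf, hess⟩ := hQ
  have : ∀ i, Module.Finite A (S i) := fun i => inferInstance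
  have hfin : Module.Finite A (LinearMap.range f.hom) := Module.Finite.range f.hom
  refine finite_of_socle R A Q (LinearMap.range f.hom) ?_
  let T : Submodule A Q :=
    { carrier := {x | ∀ a ∈ Ring.jacobson A, a • x = 0}
      zero_mem' := fun a _ => smul_zero a
      add_mem' := fun hx hy a ha => by rw [smul_add, hx a ha, hy a ha, add_zero]
      smul_mem' := fun b x hx a ha => by
        rw [← mul_smul]
        exact hx _ (Ideal.mul_mem_right _ _ ha) }
  have hJ : Module.IsTorsionBySet A T (Ring.jacobson A : Set A) := by
    rintro ⟨x, hx⟩ ⟨a, ha⟩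
    exact Subtype.ext (hx a ha)
  have hss : IsSemisimpleModule A T := by
    let _ := hJ.module
    exact (hJ.semilinearMap.isSemisimpleModule_iff_of_bijective Function.bijective_id).2
      inferInstance
  obtain ⟨C, hC⟩ := exists_isCompl ((LinearMap.range f.hom).comap T.subtype)
  have hCb : C.map T.subtype = ⊥ := by
    have hm : Mono (f ≫ ModuleCat.ofHom (C.map T.subtype).mkQ) := by
      rw [ModuleCat.mono_iff_injective, injective_iff_map_eq_zero]
      intro x hx
      have hx : f.hom x ∈ C.map T.subtype := (Submodule.Quotient.mk_eq_zero _).1 hx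
      obtain ⟨c, hc, hcx⟩ := hx
      have : c ∈ (LinearMap.range f.hom).comap T.subtype ⊓ C := ⟨⟨x, hcx.symm⟩, hc⟩
      rw [hC.inf_eq_bot] at this
      rw [(Submodule.mem_bot A).1 this, map_zero] at hcx
      exact (injective_iff_map_eq_zero _).1 ((ModuleCat.mono_iff_injective f).1 hf) x hcx.symm
    have := (ModuleCat.mono_iff_injective _).1 (hess _ _ hm)
    have h2 : LinearMap.ker (C.map T.subtype).mkQ = ⊥ := LinearMap.ker_eq_bot.2 this
    rwa [Submodule.ker_mkQ] at h2
  have hCb' : C = ⊥ := Submodule.map_injective_of_injective T.injective_subtype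
    (by rw [hCb, Submodule.map_bot])
  have htop := hC.sup_eq_top
  rw [hCb', sup_bot_eq] at htop
  intro x hx
  have : (⟨x, hx⟩ : T) ∈ (LinearMap.range f.hom).comap T.subtype := htop ▸ Submodule.mem_top
  exact this

end Q
end ArtinAux

namespace ArtinAux
open ArtinAlg

section Covers
variable {A : Type} [Ring A] [IsArtinianRing A]

lemma exists_proj_cover (M : ModuleCat.{0} A) [Module.Finite A M] :
    ∃ (P : ModuleCat.{0} A) (f : P ⟶ M), IsProjectiveCoverHom A f := by
  obtain ⟨n, π, hπ⟩ := Module.Finite.exists_fin' A M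
  obtain ⟨P, hP, hmin⟩ := IsArtinian.set_has_minimal
    {P : Submodule A (Fin n → A) | P.map π = ⊤}
    ⟨⊤, by rw [Set.mem_ofPred_eq, Submodule.map_top, LinearMap.range_eq_top.2 hπ]⟩
  have hmin' : ∀ P' : Submodule A (Fin n → A), P' ≤ P → P'.map π = ⊤ → P' = P := by
    intro P' h1 h2
    by_contra h3
    exact hmin P' h2 (lt_of_le_of_ne h1 h3)
  have hs : Function.Surjective (π ∘ₗ P.subtype) := by
    intro y
    have : y ∈ P.map π := hP ▸ Submodule.mem_top
    obtain ⟨x, hx, rfl⟩ := this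
    exact ⟨⟨x, hx⟩, rfl⟩
  have hess : ∀ (N : Type) [AddCommGroup N] [Module A N] (g : N →ₗ[A] P),
      Function.Surjective ((π ∘ₗ P.subtype) ∘ₗ g) → Function.Surjective g := by
    intro N _ _ g hg
    have h1 : (LinearMap.range g).map P.subtype = P := by
      refine hmin' _ (Submodule.map_subtype_le _ _) ?_
      rw [← Submodule.map_comp, ← LinearMap.range_comp, LinearMap.range_eq_top]
      exact hg
    have h2 : LinearMap.range g = ⊤ := by
      apply Submodule.map_injective_of_injective P.injective_subtype
      rw [h1, Submodule.map_top, Submodule.range_subtype]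
    exact LinearMap.range_eq_top.1 h2
  obtain ⟨h, hh⟩ := Module.projective_lifting_property (π ∘ₗ P.subtype) π hs
  have hsurj : Function.Surjective (h ∘ₗ P.subtype) := by
    apply hess
    rw [← LinearMap.comp_assoc, hh]
    exact hs
  have hinj := IsNoetherian.injective_of_surjective_endomorphism (h ∘ₗ P.subtype) hsurj
  let e := LinearEquiv.ofBijective (h ∘ₗ P.subtype) ⟨hinj, hsurj⟩
  have : Module.Projective A P := Module.Projective.of_split P.subtype (e.symm.toLinearMap ∘ₗ h) (by
    ext x : 1
    exact e.symm_apply_apply x)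
  refine ⟨ModuleCat.of A P, ModuleCat.ofHom (π ∘ₗ P.subtype), inferInstance,
    (ModuleCat.epi_iff_surjective _).2 hs, fun N g hg => ?_⟩
  rw [ModuleCat.epi_iff_surjective] at hg ⊢
  exact hess N g.hom hg

lemma finite_of_cover {P M : ModuleCat.{0} A} [Module.Finite A M] {f : P ⟶ M}
    (hf : IsProjectiveCoverHom A f) : Module.Finite A P := by
  obtain ⟨hP, he, hess⟩ := hf
  obtain ⟨n, π, hπ⟩ := Module.Finite.exists_fin' A M
  obtain ⟨g, hg⟩ := Module.projective_lifting_property f.hom π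
    ((ModuleCat.epi_iff_surjective f).1 he)
  have := hess (ModuleCat.of A (Fin n → A)) (ModuleCat.ofHom g) (by
    rw [ModuleCat.epi_iff_surjective]
    intro y
    obtain ⟨x, rfl⟩ := hπ y
    exact ⟨x, LinearMap.congr_fun hg x⟩)
  exact Module.Finite.of_surjective g ((ModuleCat.epi_iff_surjective _).1 this)

variable {Q : ModuleCat.{0} A}

lemma exists_nonzero (hQi : Injective Q)
    (hs : ∀ T : ModuleCat.{0} A, IsSimpleModule A T → ∃ f : T →ₗ[A] Q, Function.Injective f)
    (M : Type) [AddCommGroup M] [Module A M] (m : M) (hm : m ≠ 0) :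
    ∃ g : M →ₗ[A] Q, g m ≠ 0 := by
  have hQi' : Module.Injective A Q := (Module.injective_iff_injective_object A Q).2 hQi
  let U := Submodule.span A {m}
  have hmU : m ∈ U := Submodule.mem_span_singleton_self m
  have hne : (⊥ : Submodule A U) ≠ ⊤ := by
    intro h
    have : (⟨m, hmU⟩ : U) ∈ (⊥ : Submodule A U) := h ▸ Submodule.mem_top
    exact hm (congrArg Subtype.val ((Submodule.mem_bot A).1 this))
  obtain ⟨N, hN, -⟩ := (eq_top_or_exists_le_coatom (⊥ : Submodule A U)).resolve_left hne
  have hsimple : IsSimpleModule A (U ⧸ N) := isSimpleModule_iff_isCoatom.2 hN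
  obtain ⟨f, hf⟩ := hs (ModuleCat.of A (U ⧸ N)) hsimple
  obtain ⟨g, hg⟩ := Module.Injective.extension_property A Q U M U.subtype U.injective_subtype
    (f ∘ₗ N.mkQ)
  refine ⟨g, fun h0 => hN.1 ?_⟩
  have h1 : f (N.mkQ ⟨m, hmU⟩) = 0 := by
    rw [← h0]
    exact (LinearMap.congr_fun hg ⟨m, hmU⟩).symm
  have h2 : (⟨m, hmU⟩ : U) ∈ N := by
    rw [← Submodule.Quotient.mk_eq_zero]
    exact hf (h1.trans (map_zero f).symm)
  rw [eq_top_iff]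
  rintro ⟨x, hx⟩ -
  obtain ⟨a, rfl⟩ := Submodule.mem_span_singleton.1 hx
  exact N.smul_mem a h2

lemma exists_embedding (hQi : Injective Q)
    (hs : ∀ T : ModuleCat.{0} A, IsSimpleModule A T → ∃ f : T →ₗ[A] Q, Function.Injective f)
    (M : Type) [AddCommGroup M] [Module A M] [Module.Finite A M] :
    ∃ (n : ℕ) (f : M →ₗ[A] (Fin n → Q)), Function.Injective f := by
  obtain ⟨K, ⟨n, f, rfl⟩, hmin⟩ := IsArtinian.set_has_minimal
    {K : Submodule A M | ∃ (n : ℕ) (f : M →ₗ[A] (Fin n → Q)), LinearMap.ker f = K}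
    ⟨_, 0, 0, rfl⟩
  refine ⟨n, f, ?_⟩
  rw [← LinearMap.ker_eq_bot]
  by_contra hne
  obtain ⟨m, hm, hm0⟩ := Submodule.exists_mem_ne_zero_of_ne_bot hne
  obtain ⟨g, hg⟩ := exists_nonzero hQi hs M m hm0
  let f' : M →ₗ[A] (Fin (n + 1) → Q) :=
    LinearMap.pi (Fin.cons g (fun i => LinearMap.proj i ∘ₗ f) : Fin (n + 1) → (M →ₗ[A] Q))
  have hf' : ∀ x ∈ LinearMap.ker f', x ∈ LinearMap.ker f ∧ g x = 0 := by
    intro x hx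
    refine ⟨?_, congrFun hx 0⟩
    ext i
    exact congrFun hx i.succ
  refine hmin (LinearMap.ker f') ⟨_, f', rfl⟩ (lt_of_le_of_ne (fun x hx => (hf' x hx).1) ?_)
  intro h
  exact hg (hf' m (h ▸ hm)).2

lemma exists_inj_env [Module.Finite A Q] (hQi : Injective Q)
    (hs : ∀ T : ModuleCat.{0} A, IsSimpleModule A T → ∃ f : T →ₗ[A] Q, Function.Injective f)
    (M : ModuleCat.{0} A) [Module.Finite A M] :
    ∃ (I : ModuleCat.{0} A) (f : M ⟶ I), IsInjectiveEnvelopeHom A f := by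
  have hQi' : Module.Injective A Q := (Module.injective_iff_injective_object A Q).2 hQi
  obtain ⟨n, j, hj⟩ := exists_embedding hQi hs M
  obtain ⟨N, hN, hmax⟩ := set_has_maximal_iff_noetherian.2 inferInstance
    {N : Submodule A (Fin n → Q) | ∀ m, j m ∈ N → m = 0}
    ⟨⊥, fun m hm => hj (((Submodule.mem_bot A).1 hm).trans (map_zero j).symm)⟩
  have hmax' : ∀ N' : Submodule A (Fin n → Q), N ≤ N' → (∀ m, j m ∈ N' → m = 0) → N' = N := by
    intro N' h1 h2
    by_contra h3
    exact hmax N' h2 (lt_of_le_of_ne h1 (Ne.symm h3))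
  have hji : Function.Injective (N.mkQ ∘ₗ j) := by
    rw [injective_iff_map_eq_zero]
    intro m hm
    exact hN m ((Submodule.Quotient.mk_eq_zero _).1 hm)
  have hess : ∀ (X : Type) [AddCommGroup X] [Module A X] (g : ((Fin n → Q) ⧸ N) →ₗ[A] X),
      Function.Injective (g ∘ₗ N.mkQ ∘ₗ j) → Function.Injective g := by
    intro X _ _ g hg
    have h1 : LinearMap.ker (g ∘ₗ N.mkQ) = N := by
      refine hmax' _ (fun x hx => ?_) (fun m hm => hg ?_)
      · have : N.mkQ x = 0 := (Submodule.Quotient.mk_eq_zero _).2 hx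
        simp [LinearMap.mem_ker, this]
      · rw [map_zero]
        exact hm
    rw [injective_iff_map_eq_zero]
    intro x hx
    obtain ⟨y, rfl⟩ := N.mkQ_surjective x
    have : y ∈ LinearMap.ker (g ∘ₗ N.mkQ) := hx
    rw [h1] at this
    exact (Submodule.Quotient.mk_eq_zero _).2 this
  have hE : Module.Injective A (Fin n → Q) := inferInstance
  obtain ⟨h, hh⟩ := Module.Injective.extension_property A (Fin n → Q) M _ (N.mkQ ∘ₗ j) hji j
  have hinj : Function.Injective (N.mkQ ∘ₗ h) := by
    apply hess
    rw [LinearMap.comp_assoc, hh]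
    exact hji
  have hbij := IsArtinian.bijective_of_injective_endomorphism (N.mkQ ∘ₗ h) hinj
  let e := LinearEquiv.ofBijective (N.mkQ ∘ₗ h) hbij
  have hret : Injective (ModuleCat.of A ((Fin n → Q) ⧸ N)) := by
    have hE' : Injective (ModuleCat.of A (Fin n → Q)) :=
      (Module.injective_iff_injective_object A _).1 hE
    have r : Retract (ModuleCat.of A ((Fin n → Q) ⧸ N)) (ModuleCat.of A (Fin n → Q)) :=
      ⟨ModuleCat.ofHom h, ModuleCat.ofHom (e.symm.toLinearMap ∘ₗ N.mkQ),
        ModuleCat.hom_ext (LinearMap.ext fun x => e.symm_apply_apply _)⟩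
    rw [injective_iff_hasInjectiveDimensionLT_one] at hE' ⊢
    exact r.hasInjectiveDimensionLT 1
  refine ⟨ModuleCat.of A ((Fin n → Q) ⧸ N), ModuleCat.ofHom (N.mkQ ∘ₗ j), hret,
    (ModuleCat.mono_iff_injective _).2 hji, fun X g hg => ?_⟩
  rw [ModuleCat.mono_iff_injective] at hg ⊢
  exact hess X g.hom hg

lemma finite_of_env [Module.Finite A Q] (hQi : Injective Q)
    (hs : ∀ T : ModuleCat.{0} A, IsSimpleModule A T → ∃ f : T →ₗ[A] Q, Function.Injective f)
    {M I : ModuleCat.{0} A} [Module.Finite A M] {f : M ⟶ I}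
    (hf : IsInjectiveEnvelopeHom A f) : Module.Finite A I := by
  have hQi' : Module.Injective A Q := (Module.injective_iff_injective_object A Q).2 hQi
  obtain ⟨hI, hm, hess⟩ := hf
  obtain ⟨n, j, hj⟩ := exists_embedding hQi hs M
  obtain ⟨g, hg⟩ := Module.Injective.extension_property A (Fin n → Q) M I f.hom
    ((ModuleCat.mono_iff_injective f).1 hm) j
  have := hess (ModuleCat.of A (Fin n → Q)) (ModuleCat.ofHom g) (by
    rw [ModuleCat.mono_iff_injective]
    intro x y hxy
    apply hj
    rw [← hg]
    exact hxy)
  exact Module.Finite.of_injective g ((ModuleCat.mono_iff_injective _).1 this)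

end Covers
end ArtinAux

namespace ArtinAux
open ArtinAlg

section Levels
variable {A : Type} [Ring A]

lemma inAdd_of {X X' : ModuleCat.{0} A} {B : Type} [AddCommGroup B] [Module A B] (n : ℕ)
    (a : X →ₗ[A] X') (r : X' →ₗ[A] X) (s : X →ₗ[A] (Fin n → B)) (t : (Fin n → B) →ₗ[A] X)
    (h : ∀ x, r (a x) + t (s x) = x) : InAdd A X (ModuleCat.of A (B × X')) := by
  let i : X →ₗ[A] (Fin (n + 1) → B × X') :=
    LinearMap.pi (Fin.cases ((0 : X →ₗ[A] B).prod a)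
      (fun j => ((LinearMap.proj j).comp s).prod (0 : X →ₗ[A] X')))
  let p : (Fin (n + 1) → B × X') →ₗ[A] X :=
    r ∘ₗ LinearMap.snd A B X' ∘ₗ LinearMap.proj 0 +
      t ∘ₗ LinearMap.pi (fun j : Fin n => LinearMap.fst A B X' ∘ₗ LinearMap.proj j.succ)
  refine ⟨n + 1, ModuleCat.ofHom i, ModuleCat.ofHom p, ?_⟩
  ext x
  exact h x

lemma finite_of_sum {X Y Z : ModuleCat.{0} A} [Module.Finite A X] [Module.Finite A Y]
    (a : X ⟶ Z) (b : Y ⟶ Z) (c : Z ⟶ X) (d : Z ⟶ Y) (h : c ≫ a + d ≫ b = 𝟙 Z) :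
    Module.Finite A Z := by
  refine Module.Finite.of_surjective (a.hom.coprod b.hom) (fun z => ⟨(c z, d z), ?_⟩)
  have := congrArg (fun f => f.hom z) h
  simpa using this

/-- Finitely generated modules. -/
def FG (A : Type) [Ring A] (M : ModuleCat.{0} A) : Prop := Module.Finite A M

/-- Finitely generated modules in the opposite category. -/
def FGop (A : Type) [Ring A] (M : (ModuleCat.{0} A)ᵒᵖ) : Prop := Module.Finite A M.unop

lemma FG_sum (X Y : ModuleCat.{0} A) (hX : FG A X) (hY : FG A Y) : FG A (X ⊞ Y) := by
  unfold FG at *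
  exact finite_of_sum biprod.inl biprod.inr biprod.fst biprod.snd biprod.total

lemma FGop_sum (X Y : (ModuleCat.{0} A)ᵒᵖ) (hX : FGop A X) (hY : FGop A Y) : FGop A (X ⊞ Y) := by
  unfold FGop at *
  refine finite_of_sum (biprod.fst : X ⊞ Y ⟶ X).unop (biprod.snd : X ⊞ Y ⟶ Y).unop
    (biprod.inl : X ⟶ X ⊞ Y).unop (biprod.inr : Y ⟶ X ⊞ Y).unop ?_
  rw [← unop_comp, ← unop_comp, ← unop_add, biprod.total]
  rfl

lemma FG_iso {X Y : ModuleCat.{0} A} (e : X ≅ Y) (h : Module.Finite A X) : Module.Finite A Y :=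
  Module.Finite.equiv e.toLinearEquiv

variable [IsArtinianRing A]

lemma FG_ker (S : ShortComplex (ModuleCat.{0} A)) (hS : S.ShortExact) (h : FG A S.X₂) :
    FG A S.X₁ := by
  unfold FG at *
  exact Module.Finite.of_injective S.f.hom ((ModuleCat.mono_iff_injective _).1 hS.mono_f)

lemma FGop_ker (S : ShortComplex (ModuleCat.{0} A)ᵒᵖ) (hS : S.ShortExact) (h : FGop A S.X₂) :
    FGop A S.X₁ := by
  unfold FGop at *
  have := hS.mono_f
  exact Module.Finite.of_surjective S.f.unop.hom
    ((ModuleCat.epi_iff_surjective _).1 inferInstance)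

lemma finite_kernel {P M : ModuleCat.{0} A} (f : P ⟶ M) [Module.Finite A P] :
    Module.Finite A (kernel f : ModuleCat.{0} A) :=
  Module.Finite.of_injective (kernel.ι f).hom ((ModuleCat.mono_iff_injective _).1 inferInstance)

lemma finite_cokernel {P M : ModuleCat.{0} A} (f : P ⟶ M) [Module.Finite A M] :
    Module.Finite A (cokernel f : ModuleCat.{0} A) :=
  Module.Finite.of_surjective (cokernel.π f).hom ((ModuleCat.epi_iff_surjective _).1 inferInstance)

lemma exists_syzygy (n : ℕ) (M : ModuleCat.{0} A) [Module.Finite A M] :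
    ∃ X, IsNthSyzygy A n M X := by
  induction n generalizing M with
  | zero => exact ⟨M, ⟨Iso.refl _⟩⟩
  | succ n ih =>
    obtain ⟨P, f, hf⟩ := exists_proj_cover M
    have := finite_of_cover hf
    have := finite_kernel f
    obtain ⟨X, hX⟩ := ih (kernel f)
    exact ⟨X, kernel f, ⟨P, f, hf, ⟨Iso.refl _⟩⟩, hX⟩

lemma syz_psyz {n : ℕ} {M X : ModuleCat.{0} A} [Module.Finite A M] (h : IsNthSyzygy A n M X) :
    PSyz (FG A) n M X := by
  induction n generalizing M with
  | zero => exact h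
  | succ n ih =>
    obtain ⟨Y, ⟨P, f, hf, ⟨e⟩⟩, h⟩ := h
    have := finite_of_cover hf
    have := finite_kernel f
    have := FG_iso e.symm this
    have := hf.2.1
    refine PSyz.congr (M := M) (X := X) ?_ (Iso.refl _) (Iso.refl _)
    exact ⟨kernel f, P, kernel.ι f, f, kernel.condition f, shortExact_kernel f, hf.1,
      ‹Module.Finite A P›, (ih h).congr e (Iso.refl _)⟩

section
variable {Q : ModuleCat.{0} A} [Module.Finite A Q]

lemma exists_cosyzygy (hQi : Injective Q)
    (hs : ∀ T : ModuleCat.{0} A, IsSimpleModule A T → ∃ f : T →ₗ[A] Q, Function.Injective f)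
    (n : ℕ) (M : ModuleCat.{0} A) [Module.Finite A M] :
    ∃ X, IsNthCosyzygy A n M X := by
  induction n generalizing M with
  | zero => exact ⟨M, ⟨Iso.refl _⟩⟩
  | succ n ih =>
    obtain ⟨P, f, hf⟩ := exists_inj_env hQi hs M
    have := finite_of_env hQi hs hf
    have := finite_cokernel f
    obtain ⟨X, hX⟩ := ih (cokernel f)
    exact ⟨X, cokernel f, ⟨P, f, hf, ⟨Iso.refl _⟩⟩, hX⟩

lemma cosyz_psyz (hQi : Injective Q)
    (hs : ∀ T : ModuleCat.{0} A, IsSimpleModule A T → ∃ f : T →ₗ[A] Q, Function.Injective f)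
    {n : ℕ} {M X : ModuleCat.{0} A} [Module.Finite A M]
    (h : IsNthCosyzygy A n M X) : PSyz (FGop A) n (Opposite.op M) (Opposite.op X) := by
  induction n generalizing M with
  | zero => exact ⟨h.some.symm.op⟩
  | succ n ih =>
    obtain ⟨Y, ⟨P, f, hf, ⟨e⟩⟩, h⟩ := h
    have := finite_of_env hQi hs hf
    have := finite_cokernel f
    have := FG_iso e.symm this
    have := hf.2.1
    have := hf.1
    exact ⟨Opposite.op (cokernel f), Opposite.op P, (cokernel.π f).op, f.op,
      by rw [← op_comp, cokernel.condition, op_zero],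
      (shortExact_cokernel f).op, inferInstance,
      ‹Module.Finite A P›, (ih h).congr e.symm.op (Iso.refl _)⟩
end

lemma pd_op_of_id {C : Type*} [Category C] [Abelian C] [EnoughInjectives C] (n : ℕ) (M : C)
    (h : HasInjectiveDimensionLT M (n + 1)) :
    HasProjectiveDimensionLT (Opposite.op M) (n + 1) := by
  induction n generalizing M with
  | zero =>
    have : Injective M := (injective_iff_hasInjectiveDimensionLT_one).2 h
    have : Projective (Opposite.op M) := inferInstance
    exact projective_iff_hasProjectiveDimensionLT_one.1 this
  | succ n ih =>
    have hS := shortExact_cokernel (Injective.ι M)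
    have h3 := (hS.hasInjectiveDimensionLT_X₃_iff n
      (inferInstanceAs (Injective (Injective.under M)))).2 h
    have := ih _ h3
    have hp : Projective (Opposite.op (Injective.under M)) := inferInstance
    exact (hS.op.hasProjectiveDimensionLT_X₃_iff n hp).2 this

end Levels
end ArtinAux

namespace ArtinAux
open ArtinAlg

section Bounds
variable {A : Type} [Ring A] [IsArtinianRing A] {Q : ModuleCat.{0} A}

lemma finite_simple (S : ModuleCat.{0} A) (hS : IsSimpleModule A S) : Module.Finite A S :=
  inferInstance

lemma del_upper [Module.Finite A Q] (d : ℕ) (hQ : HasProjectiveDimensionLT Q (d + 1))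
    (S : ModuleCat.{0} A) [Module.Finite A S] (f : S ⟶ Q) [Mono f] : DelLE A d S := by
  have := finite_cokernel f
  obtain ⟨X, hX⟩ := exists_syzygy d S
  obtain ⟨X', hX'⟩ := exists_syzygy (d + 1) (cokernel f)
  obtain ⟨P, hF, hP, a, r, s, t, h⟩ := main_stab FG_ker FG_sum d _ (shortExact_cokernel f)
    ‹Module.Finite A Q› hQ (syz_psyz hX) (syz_psyz hX')
  have hF : Module.Finite A P := hF
  have hP : Module.Projective A P := (IsProjective.iff_projective (R := A) P).2 hP
  obtain ⟨n, π, hπ⟩ := Module.Finite.exists_fin' A P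
  obtain ⟨σ, hσ⟩ := Module.projective_lifting_property π LinearMap.id hπ
  refine ⟨X, hX, cokernel f, this, X', hX',
    inAdd_of n a.hom r.hom (σ ∘ₗ s.hom) (t.hom ∘ₗ π) (fun x => ?_)⟩
  have h1 := congrArg (fun f => f.hom x) h
  have h2 : π (σ (s x)) = s x := LinearMap.congr_fun hσ (s x)
  simp at h1
  simp [h2, h1]

lemma des_upper [Module.Finite A Q] (hQm : IsMinimalInjectiveCogenerator A Q) (d : ℕ)
    (hA : HasInjectiveDimensionLT (ModuleCat.of A A) (d + 1))
    (S : ModuleCat.{0} A) (hS : IsSimpleModule A S) : DesLE A d S := by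
  have hQi := Qinj hQm
  have hs : ∀ T : ModuleCat.{0} A, IsSimpleModule A T → ∃ f : T →ₗ[A] Q, Function.Injective f :=
    fun T hT => Q_simple hQm T hT
  have : Nontrivial S := IsSimpleModule.nontrivial A S
  obtain ⟨m, hm⟩ := exists_ne (0 : S)
  let g : ModuleCat.of A A ⟶ S := ModuleCat.ofHom (LinearMap.toSpanSingleton A S m)
  have hg : Epi g := (ModuleCat.epi_iff_surjective g).2
    (IsSimpleModule.toSpanSingleton_surjective A hm)
  have : Module.Finite A (ModuleCat.of A A) := inferInstanceAs (Module.Finite A A)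
  have := finite_kernel g
  obtain ⟨X, hX⟩ := exists_cosyzygy hQi hs d S
  obtain ⟨X', hX'⟩ := exists_cosyzygy hQi hs (d + 1) (kernel g)
  obtain ⟨P, hF, hP, a, r, s, t, h⟩ := main_stab FGop_ker FGop_sum d _ (shortExact_kernel g).op
    ‹Module.Finite A (ModuleCat.of A A)› (pd_op_of_id d _ hA) (cosyz_psyz hQi hs hX)
    (cosyz_psyz hQi hs hX')
  have hF : Module.Finite A P.unop := hF
  have hP : Injective P.unop := inferInstance
  obtain ⟨n, i, hi⟩ := exists_embedding hQi hs P.unop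
  let i' : P.unop ⟶ ModuleCat.of A (Fin n → Q) := ModuleCat.ofHom i
  have hi' : Mono i' := (ModuleCat.mono_iff_injective i').2 hi
  have hρ : i' ≫ Injective.factorThru (𝟙 P.unop) i' = 𝟙 _ := Injective.comp_factorThru _ _
  refine ⟨X, hX, Q, hQm, kernel g, this, X', hX',
    inAdd_of n r.unop.hom a.unop.hom (i ∘ₗ t.unop.hom)
      (s.unop.hom ∘ₗ (Injective.factorThru (𝟙 P.unop) i').hom) (fun x => ?_)⟩
  have h1 := congrArg (fun f => f.unop.hom x) h
  have h2 := congrArg (fun f => f.hom (t.unop.hom x)) hρ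
  simp at h1
  have h2 : (Injective.factorThru (𝟙 P.unop) i').hom (i (t.unop.hom x)) = t.unop.hom x := h2
  simp [h2]
  exact h1

lemma inAdd_sum {X W : ModuleCat.{0} A} (h : InAdd A X W) :
    ∃ (n : ℕ) (f : Fin n → (X ⟶ W)) (g : Fin n → (W ⟶ X)), ∑ j, f j ≫ g j = 𝟙 X := by
  obtain ⟨n, i, r, hir⟩ := h
  refine ⟨n, fun j => i ≫ ModuleCat.ofHom (LinearMap.proj j),
    fun j => ModuleCat.ofHom (LinearMap.single A (fun _ : Fin n => ↥W) j) ≫ r, ?_⟩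
  rw [← hir]
  ext x
  have key : ∀ v : Fin n → W, ∑ j, r.hom (Pi.single j (v j)) = r.hom v := by
    intro v
    rw [← map_sum, Finset.univ_sum_single]
  simpa [ModuleCat.hom_sum, LinearMap.sum_apply] using key (i.hom x)

lemma EZ_inAdd_left {X X' N : ModuleCat.{0} A} {B : Type} [AddCommGroup B] [Module A B] {k : ℕ}
    (h : InAdd A X (ModuleCat.of A (B × X'))) (hB : EZ.{0} (ModuleCat.of A B) N k)
    (hX' : EZ.{0} X' N k) : EZ.{0} X N k := by
  obtain ⟨n, f, g, hfg⟩ := inAdd_sum h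
  have h1 : EZ.{0} (ModuleCat.of A B ⊞ X') N k :=
    EZ.contra₂ (ShortComplex.Splitting.ofHasBinaryBiproduct (ModuleCat.of A B) X').shortExact hB hX'
  exact EZ.of_sum_left f g hfg
    (EZ.of_iso_left (ModuleCat.biprodIsoProd (ModuleCat.of A B) X').symm h1)

lemma EZ_inAdd_right {X X' N : ModuleCat.{0} A} {B : Type} [AddCommGroup B] [Module A B] {k : ℕ}
    (h : InAdd A X (ModuleCat.of A (B × X'))) (hB : EZ.{0} N (ModuleCat.of A B) k)
    (hX' : EZ.{0} N X' k) : EZ.{0} N X k := by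
  obtain ⟨n, f, g, hfg⟩ := inAdd_sum h
  have h1 : EZ.{0} N (ModuleCat.of A B ⊞ X') k :=
    EZ.co₂ (ShortComplex.Splitting.ofHasBinaryBiproduct (ModuleCat.of A B) X').shortExact hB hX'
  exact EZ.of_sum_right f g hfg
    (EZ.of_iso_right (ModuleCat.biprodIsoProd (ModuleCat.of A B) X').symm h1)

lemma del_lower (k : ℕ) (hA : HasInjectiveDimensionLT (ModuleCat.of A A) (k + 2))
    (S : ModuleCat.{0} A) (hS : ¬ EZ.{0} S (ModuleCat.of A A) (k + 1)) :
    ((k + 1 : ℕ) : ℕ∞) ≤ delLevel A S := by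
  refine le_sInf ?_
  rintro _ ⟨m, rfl, X, hX, M', hM', X', hX', hadd⟩
  by_contra hlt
  have hlt : m < k + 1 := by
    rw [not_le] at hlt
    exact_mod_cast hlt
  obtain ⟨j, hj⟩ : ∃ j, k + 1 = m + (j + 1) := ⟨k - m, by omega⟩
  apply hS
  rw [hj, EZ_syzygy hX]
  refine EZ_inAdd_left hadd (EZ.of_projective (inferInstance)) ?_
  rw [← EZ_syzygy hX']
  exact EZ.of_id hA (by omega)

lemma des_lower (k : ℕ) (hQ : ∀ Q, IsMinimalInjectiveCogenerator A Q → Injective Q)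
    (hpd : HasProjectiveDimensionLT Q (k + 2))
    (S : ModuleCat.{0} A) (hS : ¬ EZ.{0} Q S (k + 1)) :
    ((k + 1 : ℕ) : ℕ∞) ≤ desLevel A S := by
  refine le_sInf ?_
  rintro _ ⟨m, rfl, X, hX, Q', hQ', M', hM', X', hX', hadd⟩
  by_contra hlt
  have hlt : m < k + 1 := by
    rw [not_le] at hlt
    exact_mod_cast hlt
  obtain ⟨j, hj⟩ : ∃ j, k + 1 = m + (j + 1) := ⟨k - m, by omega⟩
  apply hS
  rw [hj, EZ_cosyzygy hX]
  refine EZ_inAdd_right hadd (EZ.of_injective (hQ Q' hQ')) ?_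
  rw [← EZ_cosyzygy hX']
  exact EZ.of_pd hpd (by omega)

end Bounds
end ArtinAux

open ArtinAlg in
/-- Let `A` be an artin algebra with minimal injective cogenerator `Q`.
Assume `pd Q = d < ∞` and `id (A A) = d' < ∞`. Then
`fin-pro A = fin-inj A = Fin-pro A = Fin-inj A = del A = des A = d = d'`. -/
theorem statement_5 (R : Type) [CommRing R] [IsArtinianRing R]
    (A : Type) [Ring A] [Algebra R A] [Module.Finite R A]
    (Q : ModuleCat.{0} A) (hQ : IsMinimalInjectiveCogenerator A Q)
    (d d' : ℕ) (hd : projDim A Q = d) (hd' : injDim A (ModuleCat.of A A) = d') :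
    finProDim A = finInjDim A ∧ finInjDim A = bigFinProDim A ∧
      bigFinProDim A = bigFinInjDim A ∧ bigFinInjDim A = delAlg A ∧
      delAlg A = desAlg A ∧ desAlg A = (d : ℕ∞) ∧ (d : ℕ∞) = (d' : ℕ∞) := by
  classical
  have hart : IsArtinianRing A := IsArtinianRing.of_finite R A
  have hQi := ArtinAux.Qinj hQ
  have hQf : Module.Finite A Q := ArtinAux.Q_finite R hQ
  have hAf : Module.Finite A (ModuleCat.of A A) := inferInstanceAs (Module.Finite A A)
  have hs : ∀ T : ModuleCat.{0} A, IsSimpleModule A T → ∃ f : T ⟶ Q, Mono f := by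
    intro T hT
    obtain ⟨f, hf⟩ := ArtinAux.Q_simple hQ T hT
    exact ⟨ModuleCat.ofHom f, (ModuleCat.mono_iff_injective _).2 hf⟩
  have hpQ : HasProjectiveDimensionLT Q (d + 1) := (ArtinAux.projDim_le_iff d Q).1 hd.le
  have hiA : HasInjectiveDimensionLT (ModuleCat.of A A) (d' + 1) :=
    (ArtinAux.injDim_le_iff d' _).1 hd'.le
  have hdd : d = d' := by
    apply le_antisymm
    · have := (ArtinAux.projDim_le_iff d' Q).2 (ArtinAux.pd_bound d' hiA _ Q hpQ)
      rw [hd] at this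
      exact_mod_cast this
    · have := (ArtinAux.injDim_le_iff d _).2 (ArtinAux.id_bound d Q hpQ hs _ _ hiA)
      rw [hd'] at this
      exact_mod_cast this
  subst hdd
  have hpb : ∀ M : ModuleCat.{0} A, projDim A M ≠ ⊤ → projDim A M ≤ d := by
    intro M hM
    obtain ⟨n, hn⟩ := ENat.ne_top_iff_exists.1 hM
    exact (ArtinAux.projDim_le_iff d M).2
      (ArtinAux.pd_bound d hiA _ M ((ArtinAux.projDim_le_iff n M).1 hn.symm.le))
  have hib : ∀ M : ModuleCat.{0} A, injDim A M ≠ ⊤ → injDim A M ≤ d := by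
    intro M hM
    obtain ⟨n, hn⟩ := ENat.ne_top_iff_exists.1 hM
    exact (ArtinAux.injDim_le_iff d M).2
      (ArtinAux.id_bound d Q hpQ hs _ M ((ArtinAux.injDim_le_iff n M).1 hn.symm.le))
  have e1 : finProDim A = d := by
    apply le_antisymm
    · refine sSup_le ?_
      rintro _ ⟨M, -, rfl, h⟩
      exact hpb M h
    · exact le_sSup ⟨Q, hQf, hd, ENat.natCast_ne_top d⟩
  have e2 : finInjDim A = d := by
    apply le_antisymm
    · refine sSup_le ?_
      rintro _ ⟨M, -, rfl, h⟩
      exact hib M h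
    · exact le_sSup ⟨ModuleCat.of A A, hAf, hd', ENat.natCast_ne_top d⟩
  have e3 : bigFinProDim A = d := by
    apply le_antisymm
    · refine sSup_le ?_
      rintro _ ⟨M, rfl, h⟩
      exact hpb M h
    · exact le_sSup ⟨Q, hd, ENat.natCast_ne_top d⟩
  have e4 : bigFinInjDim A = d := by
    apply le_antisymm
    · refine sSup_le ?_
      rintro _ ⟨M, rfl, h⟩
      exact hib M h
    · exact le_sSup ⟨ModuleCat.of A A, hd', ENat.natCast_ne_top d⟩
  have e5 : delAlg A = d := by
    apply le_antisymm
    · refine sSup_le ?_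
      rintro _ ⟨S, hS, rfl⟩
      obtain ⟨f, hf⟩ := hs S hS
      have := ArtinAux.finite_simple S hS
      exact ArtinAux.sInf_level_le (ArtinAux.del_upper d hpQ S f)
    · cases d with
      | zero => simp
      | succ k =>
        have : ∃ S : ModuleCat.{0} A, IsSimpleModule A S ∧
            ¬ ArtinAux.EZ.{0} S (ModuleCat.of A A) (k + 1) := by
          by_contra! hcon
          have h2 := (ArtinAux.injDim_le_iff k _).2 (ArtinAux.idcrit k _ hiA hcon)
          rw [hd'] at h2
          have h3 : k + 1 ≤ k := by exact_mod_cast h2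
          omega
        obtain ⟨S, hS, hS'⟩ := this
        exact (ArtinAux.del_lower k hiA S hS').trans (le_sSup ⟨S, hS, rfl⟩)
  have e6 : desAlg A = d := by
    apply le_antisymm
    · refine sSup_le ?_
      rintro _ ⟨S, hS, rfl⟩
      exact ArtinAux.sInf_level_le (ArtinAux.des_upper hQ d hiA S hS)
    · cases d with
      | zero => simp
      | succ k =>
        have : ∃ S : ModuleCat.{0} A, IsSimpleModule A S ∧ ¬ ArtinAux.EZ.{0} Q S (k + 1) := by
          by_contra! hcon
          have h2 := (ArtinAux.projDim_le_iff k _).2 (ArtinAux.pdcrit k _ hpQ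
            (ArtinAux.EZ_of_simple_right hcon _))
          rw [hd] at h2
          have h3 : k + 1 ≤ k := by exact_mod_cast h2
          omega
        obtain ⟨S, hS, hS'⟩ := this
        exact (ArtinAux.des_lower k (fun _ h => ArtinAux.Qinj h) hpQ S hS').trans
          (le_sSup ⟨S, hS, rfl⟩)
  rw [e1, e2, e3, e4, e5, e6]
  exact ⟨rfl, rfl, rfl, rfl, rfl, rfl, rfl⟩
end
end

section
/- Let A be a Nakayama algebra. A simple module U lies in the image of ψ if and only if pd U ≥ 2, and a simple module T lies in the image of γ if and only if id T ≥ 2. -/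
open CategoryTheory CategoryTheory.Limits

noncomputable section

namespace NakAux

variable {A : Type} [Ring A]

section basic

variable {M N Q U E T I : Type} [AddCommGroup M] [Module A M] [AddCommGroup N] [Module A N]
  [AddCommGroup Q] [Module A Q] [AddCommGroup U] [Module A U] [AddCommGroup E] [Module A E]
  [AddCommGroup T] [Module A T] [AddCommGroup I] [Module A I]

theorem descend (q : Q →ₗ[A] U) (hq : Function.Surjective q) (e : Q →ₗ[A] E)
    (h : ∀ x, q x = 0 → e x = 0) : ∃ s : U →ₗ[A] E, ∀ x, s (q x) = e x := by
  refine ⟨(LinearMap.ker q).liftQ e (fun x hx => h x hx) ∘ₗ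
    (q.quotKerEquivOfSurjective hq).symm.toLinearMap, fun x => ?_⟩
  simp only [LinearMap.comp_apply, LinearEquiv.coe_coe,
    LinearMap.quotKerEquivOfSurjective_symm_apply]
  exact Submodule.liftQ_apply _ _ _

theorem colift (i : T →ₗ[A] I) (hi : Function.Injective i) (e : E →ₗ[A] I)
    (h : ∀ x, ∃ y, i y = e x) : ∃ r : E →ₗ[A] T, ∀ x, i (r x) = e x := by
  refine ⟨(LinearEquiv.ofInjective i hi).symm.toLinearMap ∘ₗ
    e.codRestrict (LinearMap.range i) (fun x => h x), fun x => ?_⟩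
  have := LinearEquiv.apply_symm_apply (LinearEquiv.ofInjective i hi)
    (e.codRestrict (LinearMap.range i) (fun x => h x) x)
  exact congrArg Subtype.val this

theorem projLift [Module.Projective A Q] (g : E →ₗ[A] U) (hg : Function.Surjective g)
    (q : Q →ₗ[A] U) : ∃ e : Q →ₗ[A] E, ∀ x, g (e x) = q x := by
  obtain ⟨e, he⟩ := Module.projective_lifting_property g q hg
  exact ⟨e, fun x => LinearMap.congr_fun he x⟩

theorem injExt (hI : Module.Injective A I) (j : M →ₗ[A] N) (hj : Function.Injective j)
    (f : M →ₗ[A] I) : ∃ g : N →ₗ[A] I, ∀ x, g (j x) = f x := hI.out j hj f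

/-- If `pd U ≤ 1` and `T` is a quotient of an injective module, extensions split. -/
theorem split_of_pd (f : T →ₗ[A] E) (hf : Function.Injective f)
    (g : E →ₗ[A] U) (hg : Function.Surjective g) (hfg : ∀ x, g x = 0 ↔ ∃ y, f y = x)
    [Module.Projective A Q] (q : Q →ₗ[A] U) (hq : Function.Surjective q)
    [Module.Projective A (LinearMap.ker q)] (hI : Module.Injective A I)
    (t : I →ₗ[A] T) (ht : Function.Surjective t) :
    ∃ s : U →ₗ[A] E, ∀ x, g (s x) = x := by
  obtain ⟨e, he⟩ := projLift g hg q
  obtain ⟨k, hk⟩ := colift f hf (e ∘ₗ (LinearMap.ker q).subtype) (fun x => by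
    rw [← hfg]; simp [he])
  obtain ⟨k', hk'⟩ := projLift t ht k
  obtain ⟨k'', hk''⟩ := injExt hI (LinearMap.ker q).subtype (Submodule.subtype_injective _) k'
  have hgf : ∀ y, g (f y) = 0 := fun y => (hfg _).2 ⟨y, rfl⟩
  obtain ⟨s, hs⟩ := descend q hq (e - f ∘ₗ t ∘ₗ k'') (fun x hx => by
    have h1 := hk'' ⟨x, hx⟩
    have h2 := hk ⟨x, hx⟩
    have h3 := hk' ⟨x, hx⟩
    simp only [Submodule.subtype_apply, LinearMap.comp_apply] at h1 h2 h3
    simp [h1, h2, h3])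
  refine ⟨s, fun x => ?_⟩
  obtain ⟨y, rfl⟩ := hq x
  rw [hs]; simp [he, hgf]

theorem split_of_id {C P : Type} [AddCommGroup C] [Module A C] [AddCommGroup P] [Module A P]
    (f : T →ₗ[A] E) (hf : Function.Injective f)
    (g : E →ₗ[A] U) (hg : Function.Surjective g) (hfg : ∀ x, g x = 0 ↔ ∃ y, f y = x)
    (hI : Module.Injective A I) (i : T →ₗ[A] I) (hi : Function.Injective i)
    (hC : Module.Injective A C) (c : I →ₗ[A] C) (hc : Function.Surjective c)
    (hic : ∀ x, c x = 0 ↔ ∃ y, i y = x)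
    [Module.Projective A P] (u : U →ₗ[A] P) (hu : Function.Injective u) :
    ∃ s : U →ₗ[A] E, ∀ x, g (s x) = x := by
  have hgf : ∀ y, g (f y) = 0 := fun y => (hfg _).2 ⟨y, rfl⟩
  have hci : ∀ y, c (i y) = 0 := fun y => (hic _).2 ⟨y, rfl⟩
  obtain ⟨e, he⟩ := injExt hI f hf i
  obtain ⟨k, hk⟩ := descend g hg (c ∘ₗ e) (fun x hx => by
    obtain ⟨y, rfl⟩ := (hfg x).1 hx
    simp [he, hci])
  obtain ⟨k', hk'⟩ := injExt hC u hu k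
  obtain ⟨k'', hk''⟩ := projLift c hc k'
  obtain ⟨r, hr⟩ := colift i hi (e - k'' ∘ₗ u ∘ₗ g) (fun x => by
    rw [← hic]; simp [hk'', hk', hk])
  have hrf : ∀ y, r (f y) = y := fun y => hi (by rw [hr]; simp [he, hgf])
  obtain ⟨s, hs⟩ := descend g hg (LinearMap.id - f ∘ₗ r) (fun x hx => by
    obtain ⟨y, rfl⟩ := (hfg x).1 hx
    simp [hrf])
  refine ⟨s, fun x => ?_⟩
  obtain ⟨y, rfl⟩ := hg x
  rw [hs]; simp [hgf]

variable (A) in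
/-- uniserial modules -/
def Uni (M : Type) [AddCommGroup M] [Module A M] : Prop :=
  ∀ N₁ N₂ : Submodule A M, N₁ ≤ N₂ ∨ N₂ ≤ N₁

theorem Uni.of_inj (h : Uni A N) (f : M →ₗ[A] N) (hf : Function.Injective f) : Uni A M := by
  intro X Y
  rcases h (X.map f) (Y.map f) with h | h
  · left; exact (Submodule.map_le_map_iff_of_injective hf _ _).1 h
  · right; exact (Submodule.map_le_map_iff_of_injective hf _ _).1 h

theorem Uni.of_surj (h : Uni A M) (f : M →ₗ[A] N) (hf : Function.Surjective f) : Uni A N := by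
  intro X Y
  rcases h (X.comap f) (Y.comap f) with h | h
  · left; exact (Submodule.comap_le_comap_iff_of_surjective hf).1 h
  · right; exact (Submodule.comap_le_comap_iff_of_surjective hf).1 h

/-- A nonzero map to a simple module, from a uniserial module, is essential. -/
theorem Uni.surj_of_comp (h : Uni A M) [Nontrivial T] (f : M →ₗ[A] T) (g : N →ₗ[A] M)
    (hfg : Function.Surjective (f ∘ₗ g)) : Function.Surjective g := by
  rcases h (LinearMap.range g) (LinearMap.ker f) with h | h
  · exfalso
    obtain ⟨t, ht⟩ := exists_ne (0 : T)
    obtain ⟨n, rfl⟩ := hfg t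
    exact ht (h ⟨n, rfl⟩)
  · intro p
    obtain ⟨n, hn⟩ := hfg (f p)
    have h2 : p - g n ∈ LinearMap.ker f := by
      simp only [LinearMap.comp_apply] at hn
      simp [hn]
    obtain ⟨m, hm⟩ := h h2
    exact ⟨n + m, by simp [hm]⟩

theorem Uni.inj_of_comp (h : Uni A M) [Nontrivial T] (f : T →ₗ[A] M) (g : M →ₗ[A] N)
    (hfg : Function.Injective (g ∘ₗ f)) : Function.Injective g := by
  rw [injective_iff_map_eq_zero]
  intro x hx
  rcases h (LinearMap.range f) (LinearMap.ker g) with h | h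
  · exfalso
    obtain ⟨t, ht⟩ := exists_ne (0 : T)
    refine ht (hfg ?_)
    have : f t ∈ LinearMap.ker g := h ⟨t, rfl⟩
    simpa using this
  · obtain ⟨t, rfl⟩ := h (show x ∈ LinearMap.ker g from hx)
    have : t = 0 := hfg (by simpa using hx)
    simp [this]

theorem surj_of_ne_zero [IsSimpleModule A U] (f : M →ₗ[A] U) (x : M) (hx : f x ≠ 0) :
    Function.Surjective f := by
  rcases LinearMap.surjective_or_eq_zero f with h | h
  · exact h
  · simp [h] at hx

theorem uni_cyclic [Module.Finite A M] [Nontrivial M] (h : Uni A M) :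
    ∃ f : A →ₗ[A] M, Function.Surjective f := by
  obtain ⟨Y, hY, -⟩ := (eq_top_or_exists_le_coatom (⊥ : Submodule A M)).resolve_left bot_ne_top
  obtain ⟨y, hy⟩ : ∃ y, y ∉ Y := by
    by_contra! hh
    exact hY.1 (eq_top_iff.2 fun x _ => hh x)
  refine ⟨LinearMap.toSpanSingleton A M y, ?_⟩
  rw [← LinearMap.range_eq_top]
  rcases h (LinearMap.range (LinearMap.toSpanSingleton A M y)) Y with h | h
  · exact absurd (h ⟨1, by simp⟩) hy
  · refine hY.2 _ (lt_of_le_of_ne h ?_)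
    intro h3
    exact hy (h3 ▸ ⟨1, by simp⟩)

end basic

section nak

open ArtinAlg

set_option linter.unusedSectionVars false

variable [IsArtinianRing A]

theorem uni_or_split (hN : IsNakayama A) (M : Type) [AddCommGroup M] [Module A M]
    [Module.Finite A M] [Nontrivial M] :
    Uni A M ∨ ∃ N₁ N₂ : Submodule A M, IsCompl N₁ N₂ ∧ N₁ ≠ ⊤ ∧ N₂ ≠ ⊤ := by
  by_cases h : Indec A (ModuleCat.of A M)
  · left
    exact hN (ModuleCat.of A M) ‹_› h
  · right
    unfold Indec at h
    push Not at h
    obtain ⟨N₁, N₂, hc, h1, h2⟩ := h ‹_›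
    refine ⟨N₁, N₂, hc, ?_, ?_⟩
    · rintro rfl
      exact h2 (by simpa using hc.disjoint)
    · rintro rfl
      exact h1 (by simpa using hc.disjoint)

theorem projCover_aux (hN : IsNakayama A) (U : Type) [AddCommGroup U] [Module A U]
    [IsSimpleModule A U] (n : ℕ∞) : ∀ (P : Type) [AddCommGroup P] [Module A P]
    [Module.Finite A P] [Module.Projective A P] (f : P →ₗ[A] U), Function.Surjective f →
    Module.length A P = n →
    ∃ (P : Type) (_ : AddCommGroup P) (_ : Module A P) (_ : Module.Finite A P)
      (_ : Module.Projective A P) (f : P →ₗ[A] U), Function.Surjective f ∧ Uni A P := by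
  induction n using WellFoundedLT.induction with
  | ind n ih =>
    intro P _ _ _ _ f hf hn
    have : Nontrivial U := IsSimpleModule.nontrivial A U
    have : Nontrivial P := hf.nontrivial
    rcases uni_or_split hN P with h | ⟨N₁, N₂, hc, h1, h2⟩
    · exact ⟨P, _, _, ‹_›, ‹_›, f, hf, h⟩
    · have key : ∀ N₁ N₂ : Submodule A P, IsCompl N₁ N₂ → Module.Projective A N₁ := by
        intro N₁ N₂ hc
        exact Module.Projective.of_split N₁.subtype (N₁.projectionOnto N₂ hc) (by
          ext x; simp)
      have := key N₁ N₂ hc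
      have := key N₂ N₁ hc.symm
      obtain ⟨u, hu⟩ := exists_ne (0 : U)
      obtain ⟨p, rfl⟩ := hf u
      obtain ⟨a, ha, b, hb, rfl⟩ := Submodule.mem_sup.1
        (show p ∈ N₁ ⊔ N₂ by rw [hc.sup_eq_top]; trivial)
      by_cases h0 : f a = 0
      · refine ih (Module.length A N₂) (hn ▸ Submodule.length_lt h2) N₂ (f ∘ₗ N₂.subtype)
          (surj_of_ne_zero _ ⟨b, hb⟩ ?_) rfl
        simpa [h0] using hu
      · refine ih (Module.length A N₁) (hn ▸ Submodule.length_lt h1) N₁ (f ∘ₗ N₁.subtype)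
          (surj_of_ne_zero _ ⟨a, ha⟩ ?_) rfl
        simpa using h0

theorem projCover (hN : IsNakayama A) (U : Type) [AddCommGroup U] [Module A U]
    [IsSimpleModule A U] :
    ∃ (P : Type) (_ : AddCommGroup P) (_ : Module A P) (_ : Module.Finite A P)
      (_ : Module.Projective A P) (f : P →ₗ[A] U), Function.Surjective f ∧ Uni A P := by
  have : Nontrivial U := IsSimpleModule.nontrivial A U
  obtain ⟨u, hu⟩ := exists_ne (0 : U)
  exact projCover_aux hN U _ A (LinearMap.toSpanSingleton A U u)
    (surj_of_ne_zero _ 1 (by simpa using hu)) rfl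

/-- essential extension of a simple module -/
def EssS {S M : Type} [AddCommGroup S] [Module A S] [AddCommGroup M] [Module A M]
    (f : S →ₗ[A] M) : Prop := ∀ N : Submodule A M, N ≠ ⊥ → LinearMap.range f ≤ N

theorem EssS.uni (hN : IsNakayama A) {S M : Type} [AddCommGroup S] [Module A S]
    [AddCommGroup M] [Module A M] [Nontrivial S] [Module.Finite A M]
    (f : S →ₗ[A] M) (hf : Function.Injective f) (h : EssS f) : Uni A M := by
  have : Nontrivial M := hf.nontrivial
  rcases uni_or_split hN M with h' | ⟨N₁, N₂, hc, h1, h2⟩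
  · exact h'
  · exfalso
    have e1 := h N₁ (by rintro rfl; exact h2 (by simpa using hc.sup_eq_top))
    have e2 := h N₂ (by rintro rfl; exact h1 (by simpa using hc.sup_eq_top))
    obtain ⟨s, hs⟩ := exists_ne (0 : S)
    have := Submodule.disjoint_def.1 hc.disjoint (f s) (e1 ⟨s, rfl⟩) (e2 ⟨s, rfl⟩)
    exact hs (hf (by simpa using this))

theorem EssS.length_le (hN : IsNakayama A) {S M : Type} [AddCommGroup S] [Module A S]
    [AddCommGroup M] [Module A M] [Nontrivial S] [Module.Finite A M]
    (f : S →ₗ[A] M) (hf : Function.Injective f) (h : EssS f) :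
    Module.length A M ≤ Module.length A A := by
  have : Nontrivial M := hf.nontrivial
  obtain ⟨g, hg⟩ := uni_cyclic (h.uni hN f hf)
  exact Module.length_le_of_surjective g hg

theorem exists_max_ess (hN : IsNakayama A) (S : Type) [AddCommGroup S] [Module A S]
    [IsSimpleModule A S] :
    ∃ (M : Type) (_ : AddCommGroup M) (_ : Module A M) (_ : Module.Finite A M)
      (f : S →ₗ[A] M), Function.Injective f ∧ EssS f ∧
      ∀ (M' : Type) [AddCommGroup M'] [Module A M'] [Module.Finite A M'] (f' : S →ₗ[A] M'),
        Function.Injective f' → EssS f' → Module.length A M' ≤ Module.length A M := by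
  have : Nontrivial S := IsSimpleModule.nontrivial A S
  let s : Set ℕ := {n | ∃ (M : Type) (_ : AddCommGroup M) (_ : Module A M)
    (_ : Module.Finite A M) (f : S →ₗ[A] M), Function.Injective f ∧ EssS f ∧
    Module.length A M = n}
  have fin : ∀ (M : Type) [AddCommGroup M] [Module A M] [Module.Finite A M],
      ∃ n : ℕ, Module.length A M = n := fun M _ _ _ =>
    ⟨_, (ENat.natCast_toNat (Module.length_ne_top (R := A) (M := M))).symm⟩
  have hs : s.Nonempty := by
    obtain ⟨n, hn⟩ := fin S
    refine ⟨n, S, _, _, inferInstance, LinearMap.id, Function.injective_id, ?_, hn⟩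
    intro N h0
    rcases eq_bot_or_eq_top N with h | h
    · exact absurd h h0
    · simp [h]
  have hb : BddAbove s := by
    obtain ⟨n, hn⟩ := fin A
    refine ⟨n, ?_⟩
    rintro m ⟨M, _, _, _, f, hf, hE, hm⟩
    have := hE.length_le hN f hf
    rw [hm, hn] at this
    exact_mod_cast this
  obtain ⟨M, i1, i2, i3, f, hf, hE, hm⟩ := Nat.sSup_mem hs hb
  refine ⟨M, i1, i2, i3, f, hf, hE, ?_⟩
  intro M' _ _ _ f' hf' hE'
  obtain ⟨n, hn⟩ := fin M'
  rw [hn, hm]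
  exact_mod_cast le_csSup hb ⟨M', _, _, ‹_›, f', hf', hE', hn⟩

theorem injEnv (hN : IsNakayama A) (S : Type) [AddCommGroup S] [Module A S]
    [IsSimpleModule A S] :
    ∃ (I : Type) (_ : AddCommGroup I) (_ : Module A I) (_ : Module.Finite A I)
      (_ : Module.Injective A I) (f : S →ₗ[A] I), Function.Injective f ∧ Uni A I := by
  have : Nontrivial S := IsSimpleModule.nontrivial A S
  obtain ⟨M, _, _, _, f, hf, hE, hmax⟩ := exists_max_ess hN S
  have split : ∀ (X : Type) [AddCommGroup X] [Module A X] [Module.Finite A X]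
      (j : M →ₗ[A] X), Function.Injective j → ∃ r : X →ₗ[A] M, ∀ m, r (j m) = m := by
    intro X _ _ _ j hj
    obtain ⟨C, hC, hCmax⟩ := WellFounded.has_min
      (wellFounded_gt : WellFounded (α := Submodule A X) (· > ·))
      {C | C ⊓ LinearMap.range j = ⊥} ⟨⊥, by simp⟩
    have hinj : Function.Injective (C.mkQ ∘ₗ j) := by
      rw [injective_iff_map_eq_zero]
      intro m hm
      have h1 : j m ∈ C := by simpa using hm
      have h2 : j m ∈ C ⊓ LinearMap.range j := ⟨h1, ⟨m, rfl⟩⟩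
      rw [hC] at h2
      exact hj (by simpa using h2)
    have hE2 : EssS ((C.mkQ ∘ₗ j) ∘ₗ f) := by
      intro N hN0
      have hlt : C < N.comap C.mkQ := by
        refine lt_of_le_of_ne (fun x hx => by
          simp [(Submodule.Quotient.mk_eq_zero C).2 hx]) ?_
        intro h
        apply hN0
        rw [eq_bot_iff]
        intro y hy
        obtain ⟨x, rfl⟩ := C.mkQ_surjective y
        have : x ∈ C := by rw [h]; exact hy
        simpa using this
      have h3 : ¬ (N.comap C.mkQ ⊓ LinearMap.range j = ⊥) := fun h => hCmax _ h hlt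
      obtain ⟨x, ⟨hx1, ⟨m, rfl⟩⟩, hx0⟩ := (Submodule.ne_bot_iff _).1 h3
      have h4 := hE ((N.comap C.mkQ).comap j) (by
        rw [Submodule.ne_bot_iff]
        exact ⟨m, hx1, by rintro rfl; simp at hx0⟩)
      rintro _ ⟨s, rfl⟩
      exact h4 ⟨s, rfl⟩
    have hle := hmax (X ⧸ C) _ (hinj.comp hf) hE2
    have hsurj : Function.Surjective (C.mkQ ∘ₗ j) := by
      rw [← LinearMap.range_eq_top]
      by_contra hne
      have h5 := Submodule.length_lt hne
      rw [← (LinearEquiv.ofInjective _ hinj).length_eq] at h5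
      exact absurd h5 (not_lt.2 hle)
    refine ⟨(LinearEquiv.ofBijective _ ⟨hinj, hsurj⟩).symm.toLinearMap ∘ₗ C.mkQ, fun m => ?_⟩
    exact LinearEquiv.symm_apply_apply (LinearEquiv.ofBijective _ ⟨hinj, hsurj⟩) m
  refine ⟨M, _, _, ‹_›, ?_, f, hf, hE.uni hN f hf⟩
  apply Module.Baer.injective
  intro J g
  obtain ⟨j, hj, hI0⟩ : ∃ j : M →ₗ[A] (Injective.under (ModuleCat.of A M) : ModuleCat A),
      Function.Injective j ∧
      Module.Injective A (Injective.under (ModuleCat.of A M) : ModuleCat A) :=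
    ⟨(Injective.ι (ModuleCat.of A M)).hom,
      (ModuleCat.mono_iff_injective _).1 inferInstance,
      (Module.injective_iff_injective_object _ _).2
        (Injective.injective_under (ModuleCat.of A M))⟩
  obtain ⟨g', hg'⟩ := injExt hI0 J.subtype (Submodule.subtype_injective _) (j ∘ₗ g)
  let X := LinearMap.range j ⊔ LinearMap.range g'
  have : Module.Finite A X := by
    rw [Module.Finite.iff_fg]
    exact Submodule.FG.sup (Module.Finite.iff_fg.1 inferInstance)
      (Module.Finite.iff_fg.1 inferInstance)
  obtain ⟨r, hr⟩ := split X (j.codRestrict X (fun m => Submodule.mem_sup_left ⟨m, rfl⟩))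
    (fun a b h => hj (congrArg Subtype.val h))
  refine ⟨r ∘ₗ g'.codRestrict X (fun m => Submodule.mem_sup_right ⟨m, rfl⟩), fun x hx => ?_⟩
  rw [← hr (g ⟨x, hx⟩)]
  simp only [LinearMap.comp_apply]
  congr 1
  apply Subtype.ext
  exact hg' ⟨x, hx⟩

theorem injEnv' (hN : IsNakayama A) (Y : Type) [AddCommGroup Y] [Module A Y]
    [Module.Finite A Y] [Nontrivial Y] (hY : Uni A Y) :
    ∃ (I : Type) (_ : AddCommGroup I) (_ : Module A I) (_ : Module.Finite A I)
      (_ : Module.Injective A I) (f : Y →ₗ[A] I), Function.Injective f ∧ Uni A I := by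
  obtain ⟨S, hS, -⟩ := (eq_bot_or_exists_atom_le (⊤ : Submodule A Y)).resolve_left top_ne_bot
  have : IsSimpleModule A S := isSimpleModule_iff_isAtom.2 hS
  have : Nontrivial S := IsSimpleModule.nontrivial A S
  obtain ⟨I, i1, i2, i3, i4, f, hf, hU⟩ := injEnv hN S
  obtain ⟨g, hg⟩ := injExt i4 S.subtype (Submodule.subtype_injective _) f
  refine ⟨I, i1, i2, i3, i4, g, hY.inj_of_comp S.subtype g ?_, hU⟩
  intro a b hab
  simp only [LinearMap.comp_apply, hg] at hab
  exact hf hab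

/-- Maps from the radical of an indecomposable projective into the radical of `Y` extend. -/
theorem ext_aux (hN : IsNakayama A) {P U : Type} [AddCommGroup P] [Module A P]
    [AddCommGroup U] [Module A U] [IsSimpleModule A U] (π : P →ₗ[A] U)
    (hπ : Function.Surjective π) (n : ℕ∞) :
    ∀ (Y : Type) [AddCommGroup Y] [Module A Y] [Module.Finite A Y]
      (φ : LinearMap.ker π →ₗ[A] Y),
      (∀ x, φ x ∈ (Ring.jacobson A • (⊤ : Submodule A Y))) →
      Module.length A Y = n → ∃ ψ : P →ₗ[A] Y, ∀ x : LinearMap.ker π, ψ x = φ x := by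
  induction n using WellFoundedLT.induction with
  | ind n ih =>
    intro Y _ _ _ φ hφ hn
    rcases subsingleton_or_nontrivial Y with h0 | h0
    · exact ⟨0, fun x => Subsingleton.elim _ _⟩
    rcases uni_or_split hN Y with h | ⟨N₁, N₂, hc, h1, h2⟩
    · obtain ⟨I, _, _, _, i4, f, hf, hU⟩ := injEnv' hN Y h
      obtain ⟨g, hg⟩ := injExt i4 (LinearMap.ker π).subtype (Submodule.subtype_injective _)
        (f ∘ₗ φ)
      have hker : (LinearMap.ker π) ≤ (LinearMap.range f).comap g := by
        intro x hx
        exact ⟨φ ⟨x, hx⟩, (hg ⟨x, hx⟩).symm⟩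
      have hco : IsCoatom (LinearMap.ker π) := by
        rw [← isSimpleModule_iff_isCoatom]
        exact IsSimpleModule.congr (π.quotKerEquivOfSurjective hπ)
      have hle : LinearMap.range g ≤ LinearMap.range f := by
        rcases hU (LinearMap.range g) (LinearMap.range f) with h3 | h3
        · exact h3
        by_cases htop : (LinearMap.range f).comap g = ⊤
        · rintro _ ⟨x, rfl⟩
          have : x ∈ (LinearMap.range f).comap g := by rw [htop]; trivial
          exact this
        exfalso
        have heq : (LinearMap.range f).comap g = LinearMap.ker π := by
          by_contra hne
          exact htop (hco.2 _ (lt_of_le_of_ne hker (Ne.symm hne)))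
        have hlt := Submodule.jacobson_smul_lt_top (R := A) (M := Y) ⊤
        apply hlt.ne
        rw [eq_top_iff]
        intro y _
        obtain ⟨p, hp⟩ := h3 ⟨y, rfl⟩
        have hpk : p ∈ LinearMap.ker π := by
          rw [← heq]; exact ⟨y, hp.symm⟩
        have h5 : f (φ ⟨p, hpk⟩) = f y := by
          rw [← hp]; exact (hg ⟨p, hpk⟩).symm
        rw [← hf h5]
        exact hφ _
      obtain ⟨ψ, hψ⟩ := colift f hf g (fun x => hle ⟨x, rfl⟩)
      refine ⟨ψ, fun x => hf ?_⟩
      rw [hψ]; exact hg x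
    · have key : ∀ (N₁ N₂ : Submodule A Y) (hc : IsCompl N₁ N₂), N₁ ≠ ⊤ → ∃ r : Y →ₗ[A] N₁,
          (∀ y, r y = N₁.projectionOnto N₂ hc y) ∧
          ∃ ψ : P →ₗ[A] N₁, ∀ x : LinearMap.ker π, ψ x = r (φ x) := by
        intro N₁ N₂ hc h1
        refine ⟨N₁.projectionOnto N₂ hc, fun _ => rfl, ?_⟩
        refine ih (Module.length A N₁) (hn ▸ Submodule.length_lt h1) N₁
          (N₁.projectionOnto N₂ hc ∘ₗ φ) (fun x => ?_) rfl
        have h6 := Submodule.mem_map_of_mem (f := N₁.projectionOnto N₂ hc) (hφ x)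
        rw [Submodule.map_smul''] at h6
        exact Submodule.smul_mono le_rfl le_top h6
      obtain ⟨r1, hr1, ψ1, hψ1⟩ := key N₁ N₂ hc h1
      obtain ⟨r2, hr2, ψ2, hψ2⟩ := key N₂ N₁ hc.symm h2
      refine ⟨N₁.subtype ∘ₗ ψ1 + N₂.subtype ∘ₗ ψ2, fun x => ?_⟩
      simp only [LinearMap.add_apply, LinearMap.comp_apply, hψ1, hψ2, hr1, hr2,
        Submodule.subtype_apply]
      exact Submodule.projection_add_projection_eq_self hc _

theorem semisimple_quot (X : Type) [AddCommGroup X] [Module A X] :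
    IsSemisimpleModule A (X ⧸ (Ring.jacobson A • (⊤ : Submodule A X))) := by
  have h : Module.IsTorsionBySet A (X ⧸ (Ring.jacobson A • (⊤ : Submodule A X)))
      (Ring.jacobson A) := by
    rw [Module.isTorsionBySet_quotient_iff]
    exact fun m i hi ↦ Submodule.smul_mem_smul hi trivial
  let _ := h.module
  exact (h.semilinearMap.isSemisimpleModule_iff_of_bijective Function.bijective_id).2
    inferInstance

theorem exists_fg_smul (J : Ideal A) (X : Type) [AddCommGroup X] [Module A X] (x : X)
    (hx : x ∈ J • (⊤ : Submodule A X)) :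
    ∃ Y : Submodule A X, Y.FG ∧ x ∈ J • Y := by
  refine Submodule.smul_induction_on hx ?_ ?_
  · intro r hr n _
    exact ⟨Submodule.span A {n}, Submodule.fg_span_singleton n,
      Submodule.smul_mem_smul hr (Submodule.mem_span_singleton_self n)⟩
  · rintro x y ⟨Y1, h1, h1'⟩ ⟨Y2, h2, h2'⟩
    refine ⟨Y1 ⊔ Y2, h1.sup h2, add_mem ?_ ?_⟩
    · exact Submodule.smul_mono le_rfl le_sup_left h1'
    · exact Submodule.smul_mono le_rfl le_sup_right h2'

theorem exists_fg_smul' (J : Ideal A) (X : Type) [AddCommGroup X] [Module A X]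
    (Z : Submodule A X) (hZ : Z.FG)
    (hx : Z ≤ J • (⊤ : Submodule A X)) :
    ∃ Y : Submodule A X, Y.FG ∧ Z ≤ J • Y := by
  induction Z, hZ using Submodule.fg_induction with
  | singleton x =>
    obtain ⟨Y, h1, h2⟩ := exists_fg_smul J X x (hx (Submodule.mem_span_singleton_self x))
    exact ⟨Y, h1, by rwa [Submodule.span_singleton_le_iff_mem]⟩
  | sup M₁ M₂ hM1 hM2 h1 h2 =>
    obtain ⟨Y1, h1, h1'⟩ := h1 (le_sup_left.trans hx)
    obtain ⟨Y2, h2, h2'⟩ := h2 (le_sup_right.trans hx)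
    refine ⟨Y1 ⊔ Y2, h1.sup h2, sup_le ?_ ?_⟩
    · exact h1'.trans (Submodule.smul_mono le_rfl le_sup_left)
    · exact h2'.trans (Submodule.smul_mono le_rfl le_sup_right)

/-- Lifting property of the candidate almost split sequence. -/
theorem ar_lift (hN : IsNakayama A) {T E U X : Type} [AddCommGroup T] [Module A T]
    [AddCommGroup E] [Module A E] [AddCommGroup U] [Module A U] [AddCommGroup X] [Module A X]
    [IsSimpleModule A T] [IsSimpleModule A U]
    (f : T →ₗ[A] E) (hf : Function.Injective f)
    (g : E →ₗ[A] U) (hg : Function.Surjective g) (hfg : ∀ x, g x = 0 ↔ ∃ y, f y = x)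
    (hE : Uni A E) (h : X →ₗ[A] U) (hns : ¬ ∃ s : U →ₗ[A] X, ∀ x, h (s x) = x) :
    ∃ h' : X →ₗ[A] E, ∀ x, g (h' x) = h x := by
  by_cases h0 : ∀ x, h x = 0
  · exact ⟨0, fun x => by simp [h0]⟩
  push Not at h0
  obtain ⟨x0, hx0⟩ := h0
  have hh : Function.Surjective h := surj_of_ne_zero h x0 hx0
  have : Nontrivial U := IsSimpleModule.nontrivial A U
  have : Nontrivial T := IsSimpleModule.nontrivial A T
  obtain ⟨P, _, _, _, _, π, hπ, hP⟩ := projCover hN U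
  obtain ⟨e, he⟩ := projLift g hg π
  have hes : Function.Surjective e := hE.surj_of_comp g e (by
    intro u; obtain ⟨p, rfl⟩ := hπ u; exact ⟨p, he p⟩)
  obtain ⟨p, hp⟩ := projLift h hh π
  obtain ⟨φ, hφ⟩ := colift (LinearMap.ker h).subtype (Submodule.subtype_injective _)
    (p ∘ₗ (LinearMap.ker π).subtype) (fun x => ⟨⟨p x, by simp [hp]⟩, rfl⟩)
  obtain ⟨k, hk⟩ := colift f hf (e ∘ₗ (LinearMap.ker π).subtype) (fun x => by
    rw [← hfg]; simp [he])
  have hgf : ∀ y, g (f y) = 0 := fun y => (hfg _).2 ⟨y, rfl⟩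
  have hks : Function.Surjective k := by
    intro t
    obtain ⟨q, hq⟩ := hes (f t)
    refine ⟨⟨q, ?_⟩, hf ?_⟩
    · change π q = 0
      rw [← he, hq, hgf]
    · rw [hk]; exact hq
  set J := Ring.jacobson A with hJ
  suffices hθ : ∃ θ : LinearMap.ker h →ₗ[A] T, ∀ x, θ (φ x) = k x by
    obtain ⟨θ, hθ⟩ := hθ
    obtain ⟨h', hh'⟩ := descend ((LinearMap.ker h).subtype.coprod p) (by
      intro x
      obtain ⟨q, hq⟩ := hπ (h x)
      exact ⟨(⟨x - p q, by simp [hp, hq]⟩, q), by simp⟩)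
      ((f ∘ₗ θ).coprod e) (by
        rintro ⟨x, q⟩ hxq
        simp only [LinearMap.coprod_apply, Submodule.subtype_apply] at hxq
        have hq : π q = 0 := by
          have := congrArg h hxq
          have hx : h (x : X) = 0 := x.2
          simpa [hp, hx] using this
        have hx : x = - φ ⟨q, hq⟩ := by
          apply Subtype.ext
          have := hφ ⟨q, hq⟩
          simp only [Submodule.subtype_apply, LinearMap.comp_apply] at this
          rw [Submodule.coe_neg, this]
          exact eq_neg_of_add_eq_zero_left hxq
        have := hk ⟨q, hq⟩
        simp only [Submodule.subtype_apply, LinearMap.comp_apply] at this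
        simp [hx, hθ, this])
    refine ⟨h', fun x => ?_⟩
    obtain ⟨q, hq⟩ := hπ (h x)
    have := hh' (⟨x - p q, by simp [hp, hq]⟩, q)
    simp only [LinearMap.coprod_apply, Submodule.subtype_apply, sub_add_cancel] at this
    rw [this]
    simp [hgf, he, hq]
  let B := (LinearMap.ker h) ⧸ (J • (⊤ : Submodule A (LinearMap.ker h)))
  have hB : IsSemisimpleModule A B := semisimple_quot _
  let b : LinearMap.ker π →ₗ[A] B := (J • (⊤ : Submodule A (LinearMap.ker h))).mkQ ∘ₗ φ
  have hK : Uni A (LinearMap.ker π) := hP.of_inj _ (Submodule.subtype_injective _)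
  by_cases hb : LinearMap.ker b = ⊤
  · exfalso
    apply hns
    have hmem : LinearMap.range φ ≤ J • (⊤ : Submodule A (LinearMap.ker h)) := by
      rintro _ ⟨x, rfl⟩
      have : x ∈ LinearMap.ker b := by rw [hb]; trivial
      have h7 : b x = 0 := this
      exact (Submodule.Quotient.mk_eq_zero _).1 h7
    obtain ⟨Y, hY, hYr⟩ := exists_fg_smul' J _ _
      (Module.Finite.iff_fg.1 (inferInstance : Module.Finite A (LinearMap.range φ))) hmem
    have : Module.Finite A Y := Module.Finite.iff_fg.2 hY
    have hYle : LinearMap.range φ ≤ Y := hYr.trans Submodule.smul_le_right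
    obtain ⟨ψ, hψ⟩ := ext_aux hN π hπ _ Y
      (φ.codRestrict Y (fun x => hYle ⟨x, rfl⟩)) (fun x => by
        have h8 : φ x ∈ J • Y := hYr ⟨x, rfl⟩
        have h9 : (J • (⊤ : Submodule A Y)).map Y.subtype = J • Y := by
          rw [Submodule.map_smul'', Submodule.map_top, Submodule.range_subtype]
        rw [← h9] at h8
        obtain ⟨y, hy, hy2⟩ := h8
        have : φ.codRestrict Y (fun x => hYle ⟨x, rfl⟩) x = y := Subtype.ext hy2.symm
        rw [this]; exact hy) rfl
    obtain ⟨s, hs⟩ := descend π hπ (p - (LinearMap.ker h).subtype ∘ₗ Y.subtype ∘ₗ ψ) (by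
      intro x hx
      have h1 := hψ ⟨x, hx⟩
      have h2 := hφ ⟨x, hx⟩
      simp only [Submodule.subtype_apply, LinearMap.comp_apply] at h1 h2
      simp [h1, h2])
    refine ⟨s, fun u => ?_⟩
    obtain ⟨q, rfl⟩ := hπ u
    rw [hs]
    have : h ((ψ q : LinearMap.ker h) : X) = 0 := (ψ q : LinearMap.ker h).2
    simp [hp, this]
  · have hle : LinearMap.ker b ≤ LinearMap.ker k := by
      rcases hK (LinearMap.ker b) (LinearMap.ker k) with h3 | h3
      · exact h3
      have hco : IsCoatom (LinearMap.ker k) := by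
        rw [← isSimpleModule_iff_isCoatom]
        exact IsSimpleModule.congr (k.quotKerEquivOfSurjective hks)
      by_contra hne
      exact hb (hco.2 _ (lt_of_le_of_ne h3 (fun h => hne h.ge)))
    obtain ⟨m, hm⟩ := descend b.rangeRestrict b.surjective_rangeRestrict k (fun x hx =>
      hle (by
        have := congrArg Subtype.val hx
        exact this))
    obtain ⟨C, hC⟩ := exists_isCompl (LinearMap.range b)
    refine ⟨m ∘ₗ (LinearMap.range b).projectionOnto C hC ∘ₗ
      (J • (⊤ : Submodule A (LinearMap.ker h))).mkQ, fun x => ?_⟩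
    rw [← hm x]
    simp only [LinearMap.comp_apply]
    congr 1
    exact Submodule.projectionOnto_apply_left hC (b.rangeRestrict x)

theorem nontriv_of_not_proj (M : Type) [AddCommGroup M] [Module A M]
    (h : ¬ Module.Projective A M) : Nontrivial M := by
  by_contra h'
  rw [not_nontrivial_iff_subsingleton] at h'
  exact h inferInstance

theorem nontriv_of_not_inj (M : Type) [AddCommGroup M] [Module A M]
    (h : ¬ Module.Injective A M) : Nontrivial M := by
  by_contra h'
  rw [not_nontrivial_iff_subsingleton] at h'
  exact h ⟨fun X Y _ _ _ _ f _ g => ⟨0, fun x => Subsingleton.elim _ _⟩⟩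

theorem projCover' (hN : IsNakayama A) (D : Type) [AddCommGroup D] [Module A D]
    [Module.Finite A D] [Nontrivial D] (hD : Uni A D) :
    ∃ (P : Type) (_ : AddCommGroup P) (_ : Module A P) (_ : Module.Finite A P)
      (_ : Module.Projective A P) (f : P →ₗ[A] D), Function.Surjective f ∧ Uni A P := by
  obtain ⟨Y, hY, -⟩ := (eq_top_or_exists_le_coatom (⊥ : Submodule A D)).resolve_left bot_ne_top
  have : IsSimpleModule A (D ⧸ Y) := isSimpleModule_iff_isCoatom.2 hY
  have : Nontrivial (D ⧸ Y) := IsSimpleModule.nontrivial A _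
  obtain ⟨P, i1, i2, i3, i4, f, hf, hU⟩ := projCover hN (D ⧸ Y)
  obtain ⟨g, hg⟩ := projLift Y.mkQ Y.mkQ_surjective f
  refine ⟨P, i1, i2, i3, i4, g, hD.surj_of_comp Y.mkQ g ?_, hU⟩
  intro y
  obtain ⟨x, rfl⟩ := hf y
  exact ⟨x, hg x⟩

theorem psi_rev (hN : IsNakayama A) (U : Type) [AddCommGroup U] [Module A U]
    [IsSimpleModule A U]
    (hpd : ∀ (P : Type) [AddCommGroup P] [Module A P] [Module.Projective A P]
      (π : P →ₗ[A] U), Function.Surjective π → ¬ Module.Projective A (LinearMap.ker π)) :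
    ∃ (S : Type) (_ : AddCommGroup S) (_ : Module A S) (_ : IsSimpleModule A S)
      (I : Type) (_ : AddCommGroup I) (_ : Module A I) (_ : Module.Injective A I)
      (T : Type) (_ : AddCommGroup T) (_ : Module A T) (_ : IsSimpleModule A T)
      (E : Type) (_ : AddCommGroup E) (_ : Module A E)
      (ι : S →ₗ[A] I) (t : I →ₗ[A] T) (f : T →ₗ[A] E) (g : E →ₗ[A] U),
      Uni A I ∧ Uni A E ∧ Function.Injective ι ∧ Function.Surjective t ∧
      Function.Injective f ∧ Function.Surjective g ∧ (∀ x, g x = 0 ↔ ∃ y, f y = x) := by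
  have : Nontrivial U := IsSimpleModule.nontrivial A U
  obtain ⟨P, _, _, _, _, π, hπ, hP⟩ := projCover hN U
  have : Nontrivial P := hπ.nontrivial
  have hKnp := hpd P π hπ
  have hKn := nontriv_of_not_proj _ hKnp
  have hK : Uni A (LinearMap.ker π) := hP.of_inj _ (Submodule.subtype_injective _)
  have hco : IsCoatom (LinearMap.ker π) := by
    rw [← isSimpleModule_iff_isCoatom]
    exact IsSimpleModule.congr (π.quotKerEquivOfSurjective hπ)
  obtain ⟨K1, hK1, -⟩ :=
    (eq_top_or_exists_le_coatom (⊥ : Submodule A (LinearMap.ker π))).resolve_left bot_ne_top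
  have hT : IsSimpleModule A (LinearMap.ker π ⧸ K1) := isSimpleModule_iff_isCoatom.2 hK1
  have : Nontrivial (LinearMap.ker π ⧸ K1) := IsSimpleModule.nontrivial A _
  let K1' := K1.map (LinearMap.ker π).subtype
  have hK1' : ∀ x : LinearMap.ker π, (x : P) ∈ K1' ↔ x ∈ K1 := by
    intro x
    constructor
    · rintro ⟨y, hy, hyx⟩
      rwa [← Subtype.ext hyx]
    · exact fun h => ⟨x, h, rfl⟩
  obtain ⟨f, hf⟩ := descend K1.mkQ K1.mkQ_surjective
    (K1'.mkQ ∘ₗ (LinearMap.ker π).subtype) (fun x hx => by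
      have : x ∈ K1 := by simpa using hx
      simpa using (hK1' x).2 this)
  obtain ⟨g, hg⟩ := descend K1'.mkQ K1'.mkQ_surjective π (fun x hx => by
      have : x ∈ K1' := by simpa using hx
      obtain ⟨y, _, rfl⟩ := this
      exact y.2)
  have hfinj : Function.Injective f := by
    rw [injective_iff_map_eq_zero]
    intro x hx
    obtain ⟨x, rfl⟩ := K1.mkQ_surjective x
    rw [hf] at hx
    have h1 : (x : P) ∈ K1' := by simpa using hx
    simpa using (hK1' x).1 h1
  have hgs : Function.Surjective g := by
    intro u; obtain ⟨p, rfl⟩ := hπ u; exact ⟨_, hg p⟩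
  have hfg : ∀ x, g x = 0 ↔ ∃ y, f y = x := by
    intro x
    constructor
    · intro hx
      obtain ⟨p, rfl⟩ := K1'.mkQ_surjective x
      rw [hg] at hx
      exact ⟨K1.mkQ ⟨p, hx⟩, hf _⟩
    · rintro ⟨y, rfl⟩
      obtain ⟨y, rfl⟩ := K1.mkQ_surjective y
      rw [hf]
      simp only [LinearMap.comp_apply, hg]
      exact y.2
  obtain ⟨Q, _, _, _, _, ρ, hρ, hQ⟩ := projCover hN (LinearMap.ker π ⧸ K1)
  obtain ⟨c, hc⟩ := projLift K1.mkQ K1.mkQ_surjective ρ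
  have hcs : Function.Surjective c := hK.surj_of_comp K1.mkQ c (by
    intro u; obtain ⟨q, rfl⟩ := hρ u; exact ⟨q, hc q⟩)
  have hLn : Nontrivial (LinearMap.ker c) := by
    rw [Submodule.nontrivial_iff_ne_bot]
    intro h
    exact hKnp (Module.Projective.of_equiv
      (LinearEquiv.ofBijective c ⟨LinearMap.ker_eq_bot.1 h, hcs⟩))
  obtain ⟨L1, hL1, -⟩ :=
    (eq_top_or_exists_le_coatom (⊥ : Submodule A (LinearMap.ker c))).resolve_left bot_ne_top
  have hS : IsSimpleModule A (LinearMap.ker c ⧸ L1) := isSimpleModule_iff_isCoatom.2 hL1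
  have : Nontrivial (LinearMap.ker c ⧸ L1) := IsSimpleModule.nontrivial A _
  obtain ⟨I, _, _, _, hI, ι, hι, hIU⟩ := injEnv hN (LinearMap.ker c ⧸ L1)
  obtain ⟨s0, hs0⟩ := exists_ne (0 : LinearMap.ker c ⧸ L1)
  obtain ⟨m, hm⟩ := injExt hI (LinearMap.ker c).subtype (Submodule.subtype_injective _)
    (ι ∘ₗ L1.mkQ)
  simp only [Submodule.subtype_apply, LinearMap.comp_apply] at hm
  have hmL : LinearMap.ker m ≤ LinearMap.ker c := by
    rcases hQ (LinearMap.ker m) (LinearMap.ker c) with h | h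
    · exact h
    exfalso
    obtain ⟨l, rfl⟩ := L1.mkQ_surjective s0
    have h1 : m l = 0 := h l.2
    rw [hm] at h1
    exact hs0 (hι (by simpa using h1))
  have hms : Function.Surjective m := by
    by_contra hns
    let C := I ⧸ LinearMap.range ι
    have hCU : Uni A C := hIU.of_surj (LinearMap.range ι).mkQ (Submodule.mkQ_surjective _)
    obtain ⟨κ, hκ⟩ := descend c hcs ((LinearMap.range ι).mkQ ∘ₗ m) (fun x hx => by
      have h1 : m x = ι _ := hm ⟨x, hx⟩
      simp [h1])
    have hκi : Function.Injective κ := by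
      rw [injective_iff_map_eq_zero]
      intro k hk
      obtain ⟨q, rfl⟩ := hcs k
      rw [hκ] at hk
      obtain ⟨s, hs⟩ : m q ∈ LinearMap.range ι := by simpa using hk
      obtain ⟨l, rfl⟩ := L1.mkQ_surjective s
      rw [← hm] at hs
      have h1 : q - l ∈ LinearMap.ker m := by simp [hs]
      have h2 := hmL h1
      have h3 : c (l : Q) = 0 := l.2
      simpa [h3] using h2
    have hκn : ¬ Function.Surjective κ := by
      intro hκs
      apply hns
      intro x
      obtain ⟨k, hk⟩ := hκs ((LinearMap.range ι).mkQ x)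
      obtain ⟨q, rfl⟩ := hcs k
      rw [hκ] at hk
      have h1 : m q - x ∈ LinearMap.range ι := (Submodule.Quotient.eq _).1 hk
      obtain ⟨s, hs⟩ := h1
      obtain ⟨l, rfl⟩ := L1.mkQ_surjective s
      rw [← hm] at hs
      exact ⟨q - l, by rw [map_sub, hs]; abel⟩
    obtain ⟨W, _, _, _, hW, a, ha, hWU⟩ := injEnv' hN _ hK
    obtain ⟨α, hα⟩ := injExt hW κ hκi a
    have hαi : Function.Injective α := hCU.inj_of_comp κ α (by
      intro x y hxy
      simp only [LinearMap.comp_apply, hα] at hxy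
      exact ha hxy)
    obtain ⟨β, hβ⟩ := injExt hW (LinearMap.ker π).subtype (Submodule.subtype_injective _) a
    have hβi : Function.Injective β := hP.inj_of_comp (LinearMap.ker π).subtype β (by
      intro x y hxy
      simp only [LinearMap.comp_apply, hβ] at hxy
      exact ha hxy)
    have hle : LinearMap.range β ≤ LinearMap.range α := by
      rcases hWU (LinearMap.range β) (LinearMap.range α) with h3 | h3
      · exact h3
      by_cases htop : (LinearMap.range α).comap β = ⊤
      · rintro _ ⟨x, rfl⟩
        have : x ∈ (LinearMap.range α).comap β := by rw [htop]; trivial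
        exact this
      exfalso
      have hker : LinearMap.ker π ≤ (LinearMap.range α).comap β := by
        intro x hx
        refine ⟨κ ⟨x, hx⟩, ?_⟩
        rw [hα]; exact (hβ ⟨x, hx⟩).symm
      have heq : (LinearMap.range α).comap β = LinearMap.ker π := by
        by_contra hne
        exact htop (hco.2 _ (lt_of_le_of_ne hker (Ne.symm hne)))
      apply hκn
      intro x
      obtain ⟨p, hp⟩ := h3 ⟨x, rfl⟩
      have hpk : p ∈ LinearMap.ker π := by
        rw [← heq]; exact ⟨x, hp.symm⟩
      refine ⟨⟨p, hpk⟩, hαi ?_⟩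
      rw [hα, ← hp]
      exact (hβ ⟨p, hpk⟩).symm
    obtain ⟨δ, hδ⟩ := colift α hαi β (fun x => hle ⟨x, rfl⟩)
    have hδ0 : ∀ p, δ p = 0 → p = 0 := by
      intro p hp
      have := hδ p
      rw [hp, map_zero] at this
      exact hβi (by rw [← this, map_zero])
    obtain ⟨δ', hδ'⟩ := projLift (LinearMap.range ι).mkQ (Submodule.mkQ_surjective _) δ
    rcases hIU (LinearMap.range ι) (LinearMap.range δ') with h | h
    · obtain ⟨p, hp⟩ := h ⟨s0, rfl⟩
      have h1 : δ p = 0 := by rw [← hδ', hp]; simp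
      rw [hδ0 p h1, map_zero] at hp
      exact hs0 (hι (by rw [← hp, map_zero]))
    · obtain ⟨p, hp⟩ := exists_ne (0 : P)
      apply hp
      apply hδ0
      rw [← hδ']
      have := h ⟨p, rfl⟩
      simpa using this
  obtain ⟨t, ht⟩ := descend m hms ρ (fun x hx => by
    have h1 : c x = 0 := hmL hx
    rw [← hc, h1, map_zero])
  have hts : Function.Surjective t := by
    intro u; obtain ⟨p, rfl⟩ := hρ u; exact ⟨_, ht p⟩
  exact ⟨_, _, _, hS, I, _, _, hI, _, _, _, hT, _, _, _, ι, t, f, g, hIU,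
    hP.of_surj _ K1'.mkQ_surjective, hι, hts, hfinj, hgs, hfg⟩

theorem gamma_rev (hN : IsNakayama A) (T : Type) [AddCommGroup T] [Module A T]
    [IsSimpleModule A T]
    (hid : ∀ (I : Type) [AddCommGroup I] [Module A I] (i : T →ₗ[A] I),
      Module.Injective A I → Function.Injective i →
      ¬ Module.Injective A (I ⧸ LinearMap.range i)) :
    ∃ (S : Type) (_ : AddCommGroup S) (_ : Module A S) (_ : IsSimpleModule A S)
      (P : Type) (_ : AddCommGroup P) (_ : Module A P) (_ : Module.Projective A P)
      (U : Type) (_ : AddCommGroup U) (_ : Module A U) (_ : IsSimpleModule A U)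
      (E : Type) (_ : AddCommGroup E) (_ : Module A E)
      (ρ : P →ₗ[A] S) (u : U →ₗ[A] P) (f : T →ₗ[A] E) (g : E →ₗ[A] U),
      Uni A P ∧ Uni A E ∧ Function.Surjective ρ ∧ Function.Injective u ∧
      Function.Injective f ∧ Function.Surjective g ∧ (∀ x, g x = 0 ↔ ∃ y, f y = x) := by
  have : Nontrivial T := IsSimpleModule.nontrivial A T
  obtain ⟨I, _, _, _, hI, i, hi, hIU⟩ := injEnv hN T
  have : Nontrivial I := hi.nontrivial
  have hDni := hid I i hI hi
  have hDn := nontriv_of_not_inj _ hDni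
  have hDU : Uni A (I ⧸ LinearMap.range i) := hIU.of_surj _ (Submodule.mkQ_surjective _)
  let w := (LinearMap.range i).mkQ
  have hws : Function.Surjective w := Submodule.mkQ_surjective _
  have hw0 : ∀ x, w x = 0 ↔ ∃ y, i y = x := fun x => by
    simp only [w, Submodule.mkQ_apply, Submodule.Quotient.mk_eq_zero]; rfl
  obtain ⟨U, hUat, -⟩ := (eq_bot_or_exists_atom_le
    (⊤ : Submodule A (I ⧸ LinearMap.range i))).resolve_left top_ne_bot
  have hU : IsSimpleModule A U := isSimpleModule_iff_isAtom.2 hUat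
  let E := U.comap w
  let f : T →ₗ[A] E := i.codRestrict E (fun x => by
    change w (i x) ∈ U
    rw [(hw0 _).2 ⟨x, rfl⟩]; exact zero_mem _)
  let g : E →ₗ[A] U := w.restrict (fun x hx => hx)
  have hfinj : Function.Injective f := fun a b h => hi (congrArg Subtype.val h)
  have hgs : Function.Surjective g := by
    rintro ⟨u, hu⟩
    obtain ⟨x, rfl⟩ := hws u
    exact ⟨⟨x, hu⟩, rfl⟩
  have hfg : ∀ x, g x = 0 ↔ ∃ y, f y = x := by
    rintro ⟨x, hx⟩
    have h1 : g ⟨x, hx⟩ = 0 ↔ w x = 0 := Subtype.ext_iff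
    rw [h1, hw0]
    exact exists_congr fun y =>
      ⟨fun h => Subtype.ext h, fun h => congrArg Subtype.val h⟩
  obtain ⟨J, _, _, _, hJ, d, hd, hJU⟩ := injEnv' hN _ hDU
  have hdn : Nontrivial (J ⧸ LinearMap.range d) := by
    rw [Submodule.Quotient.nontrivial_iff]
    intro h
    apply hDni
    rw [LinearMap.range_eq_top] at h
    let e := LinearEquiv.ofBijective d ⟨hd, h⟩
    refine ⟨fun X Y _ _ _ _ f hf g => ?_⟩
    obtain ⟨k, hk⟩ := injExt hJ f hf (d ∘ₗ g)
    refine ⟨e.symm.toLinearMap ∘ₗ k, fun x => ?_⟩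
    simp only [LinearMap.comp_apply, hk]
    exact e.symm_apply_apply (g x)
  obtain ⟨S, hSat, -⟩ := (eq_bot_or_exists_atom_le
    (⊤ : Submodule A (J ⧸ LinearMap.range d))).resolve_left top_ne_bot
  have hS : IsSimpleModule A S := isSimpleModule_iff_isAtom.2 hSat
  have : Nontrivial S := IsSimpleModule.nontrivial A S
  let v := (LinearMap.range d).mkQ
  have hvs : Function.Surjective v := Submodule.mkQ_surjective _
  have hv0 : ∀ x, v x = 0 ↔ ∃ y, d y = x := fun x => by
    simp only [v, Submodule.mkQ_apply, Submodule.Quotient.mk_eq_zero]; rfl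
  let σ : S.comap v →ₗ[A] S := v.restrict (fun x hx => hx)
  have hσ : Function.Surjective σ := by
    rintro ⟨u, hu⟩
    obtain ⟨x, rfl⟩ := hvs u
    exact ⟨⟨x, hu⟩, rfl⟩
  have hJ'U : Uni A (S.comap v) := hJU.of_inj _ (Submodule.subtype_injective _)
  have hdS : ∀ y, d y ∈ S.comap v := fun y => by
    change v (d y) ∈ S
    rw [(hv0 _).2 ⟨y, rfl⟩]; exact zero_mem _
  obtain ⟨P, _, _, _, hPp, ρ, hρ, hP⟩ := projCover hN S
  obtain ⟨b, hb⟩ := projLift σ hσ ρ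
  have hbs : Function.Surjective b := hJ'U.surj_of_comp σ b (by
    intro u; obtain ⟨q, rfl⟩ := hρ u; exact ⟨q, hb q⟩)
  have hσ0 : ∀ x, σ x = 0 ↔ ∃ y, d y = x := by
    rintro ⟨x, hx⟩
    have h1 : σ ⟨x, hx⟩ = 0 ↔ v x = 0 := Subtype.ext_iff
    rw [h1, hv0]
  obtain ⟨δ, hδ⟩ := colift d hd ((S.comap v).subtype ∘ₗ b ∘ₗ (LinearMap.ker ρ).subtype)
    (fun x => by
      apply (hσ0 _).1
      simp only [LinearMap.comp_apply, hb]
      exact x.2)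
  simp only [LinearMap.comp_apply, Submodule.subtype_apply] at hδ
  have hδs : Function.Surjective δ := by
    intro y
    obtain ⟨p, hp⟩ := hbs ⟨d y, hdS y⟩
    have hpk : ρ p = 0 := by
      rw [← hb, hp, hσ0]; exact ⟨y, rfl⟩
    refine ⟨⟨p, hpk⟩, hd ?_⟩
    rw [hδ]; simp [hp]
  have hKU : Uni A (LinearMap.ker ρ) := hP.of_inj _ (Submodule.subtype_injective _)
  have hbi : Function.Injective b := by
    by_contra hbn
    obtain ⟨Q, _, _, _, _, η, hη, hQ⟩ := projCover' hN _ hDU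
    obtain ⟨α, hα⟩ := projLift w hws η
    have hαs : Function.Surjective α := hIU.surj_of_comp w α (by
      intro u; obtain ⟨q, rfl⟩ := hη u; exact ⟨q, hα q⟩)
    obtain ⟨β, hβ⟩ := projLift δ hδs η
    have hβs : Function.Surjective β := hKU.surj_of_comp δ β (by
      intro u; obtain ⟨q, rfl⟩ := hη u; exact ⟨q, hβ q⟩)
    have hle : LinearMap.ker β ≤ LinearMap.ker α := by
      rcases hQ (LinearMap.ker β) (LinearMap.ker α) with h | h
      · exact h
      obtain ⟨r, hr⟩ := colift i hi (α ∘ₗ (LinearMap.ker β).subtype) (fun x => by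
        rw [← hw0]
        have : β (x : Q) = 0 := x.2
        simp [hα, ← hβ, this])
      simp only [LinearMap.comp_apply, Submodule.subtype_apply] at hr
      rcases LinearMap.surjective_or_eq_zero r with hrs | hr0
      · exfalso
        apply hbn
        rw [injective_iff_map_eq_zero]
        intro p hp
        have hpk : ρ p = 0 := by rw [← hb, hp, map_zero]
        have h1 : δ ⟨p, hpk⟩ = 0 := hd (by rw [hδ]; simp [hp])
        obtain ⟨x, hx⟩ := hβs ⟨p, hpk⟩
        have h2 : η x = 0 := by rw [← hβ, hx, h1]
        rw [← hα, hw0] at h2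
        obtain ⟨y, hy⟩ := h2
        obtain ⟨z, rfl⟩ := hrs y
        rw [hr] at hy
        have h3 : x - z ∈ LinearMap.ker α := by simp [hy]
        have h4 := h h3
        have h5 : β (z : Q) = 0 := z.2
        have h6 : β x = 0 := by simpa [h5] using h4
        rw [h6] at hx
        exact (congrArg Subtype.val hx).symm
      · intro x hx
        have := hr ⟨x, hx⟩
        rw [hr0] at this
        simpa using this.symm
    obtain ⟨ζ, hζ⟩ := descend β hβs α (fun x hx => hle hx)
    have hζs : Function.Surjective ζ := by
      intro u; obtain ⟨q, rfl⟩ := hαs u; exact ⟨_, hζ q⟩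
    obtain ⟨ζ', hζ'⟩ := injExt hI (LinearMap.ker ρ).subtype (Submodule.subtype_injective _) ζ
    simp only [Submodule.subtype_apply] at hζ'
    rcases hP (LinearMap.ker ρ) (LinearMap.ker ζ') with h | h
    · obtain ⟨x, hx⟩ := exists_ne (0 : I)
      obtain ⟨k, rfl⟩ := hζs x
      apply hx
      rw [← hζ']
      exact h k.2
    · obtain ⟨s, hs⟩ := exists_ne (0 : S)
      obtain ⟨p, rfl⟩ := hρ s
      apply hs
      obtain ⟨k, hk⟩ := hζs (ζ' p)
      rw [← hζ'] at hk
      have h1 : p - k ∈ LinearMap.ker ζ' := by simp [hk]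
      have h2 := h h1
      have h3 : ρ (k : P) = 0 := k.2
      simpa [h3] using h2
  obtain ⟨u, hu⟩ := colift b hbi (d.codRestrict (S.comap v) hdS ∘ₗ U.subtype)
    (fun x => hbs _)
  have hui : Function.Injective u := by
    intro x y hxy
    have h1 := hu x
    rw [hxy, hu y] at h1
    exact (Subtype.ext (hd (congrArg Subtype.val h1))).symm
  exact ⟨_, _, _, hS, P, _, _, hPp, _, _, _, hU, _, _, _, ρ, u, f, g, hP,
    hIU.of_inj _ E.subtype_injective, hρ, hui, hfinj, hgs, hfg⟩

theorem indec_of_simple (T : Type) [AddCommGroup T] [Module A T] [IsSimpleModule A T] :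
    Indec A (ModuleCat.of A T) := by
  refine ⟨IsSimpleModule.nontrivial A T, fun N₁ N₂ hc => ?_⟩
  have : IsSimpleModule A (ModuleCat.of A T) := ‹_›
  rcases eq_bot_or_eq_top N₁ with h | h
  · exact Or.inl h
  · right
    rw [h] at hc
    simpa using hc.disjoint

theorem isTau (hN : IsNakayama A) {T E U : Type} [AddCommGroup T] [Module A T]
    [AddCommGroup E] [Module A E] [AddCommGroup U] [Module A U]
    [IsSimpleModule A T] [IsSimpleModule A U]
    (f : T →ₗ[A] E) (hf : Function.Injective f)
    (g : E →ₗ[A] U) (hg : Function.Surjective g) (hfg : ∀ x, g x = 0 ↔ ∃ y, f y = x)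
    (hE : Uni A E) : IsTauOf A (ModuleCat.of A T) (ModuleCat.of A U) := by
  have : Nontrivial U := IsSimpleModule.nontrivial A U
  have : Nontrivial T := IsSimpleModule.nontrivial A T
  have hgf : ∀ y, g (f y) = 0 := fun y => (hfg _).2 ⟨y, rfl⟩
  refine ⟨ModuleCat.of A E, ModuleCat.ofHom f, ModuleCat.ofHom g, ?_, ?_, ?_, ?_,
    indec_of_simple T, indec_of_simple U, ?_⟩
  · exact (ModuleCat.mono_iff_injective _).2 hf
  · exact (ModuleCat.epi_iff_surjective _).2 hg
  · refine ⟨by ext x; exact hgf x, ?_⟩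
    rw [ShortComplex.moduleCat_exact_iff]
    intro x hx
    exact (hfg x).1 hx
  · rintro ⟨s, hs⟩
    have hs' : ∀ x, g (s.hom x) = x := fun x => by
      have := congrArg (fun k => k.hom x) hs
      exact this
    have hsurj := hE.surj_of_comp g s.hom (fun x => ⟨x, hs' x⟩)
    obtain ⟨t, ht⟩ := exists_ne (0 : T)
    obtain ⟨u, hu⟩ := hsurj (f t)
    have h1 : u = 0 := by rw [← hs' u]; rw [hu]; exact hgf t
    rw [h1, map_zero] at hu
    exact ht (hf (by rw [← hu, map_zero]))
  · intro X h hns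
    obtain ⟨h', hh'⟩ := ar_lift hN f hf g hg hfg hE h.hom (by
      rintro ⟨s, hs⟩
      exact hns ⟨ModuleCat.ofHom s, by ext x; exact hs x⟩)
    exact ⟨ModuleCat.ofHom h', by ext x; exact hh' x⟩

end nak

end NakAux

open ArtinAlg in
/-- Let `A` be a Nakayama algebra. A simple module `U` lies in the image
of `ψ` iff `pd U ≥ 2`, and a simple module `T` lies in the image of `γ` iff `id T ≥ 2`. -/
theorem statement_6 (R : Type) [CommRing R] [IsArtinianRing R]
    (A : Type) [Ring A] [Algebra R A] [Module.Finite R A]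
    (hNak : IsNakayama A) :
    (∀ U : ModuleCat.{0} A, IsSimpleModule A ↥U →
      ((∃ S : ModuleCat.{0} A, IsSimpleModule A ↥S ∧ IsPsiOf A S U) ↔
        (2 : ℕ∞) ≤ projDim A U)) ∧
    (∀ T : ModuleCat.{0} A, IsSimpleModule A ↥T →
      ((∃ S : ModuleCat.{0} A, IsSimpleModule A ↥S ∧ IsGammaOf A S T) ↔
        (2 : ℕ∞) ≤ injDim A T)) := by
  have hArt : IsArtinianRing A := IsArtinianRing.of_finite R A
  have exact_of : ∀ {X Y Z : ModuleCat.{0} A} (f : X ⟶ Y) (g : Y ⟶ Z),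
      (∃ w : f ≫ g = 0, (ShortComplex.mk f g w).Exact) →
      ∀ x, g.hom x = 0 ↔ ∃ y, f.hom y = x := by
    rintro X Y Z f g ⟨w, hw⟩ x
    constructor
    · intro hx
      exact (ShortComplex.moduleCat_exact_iff _).1 hw x hx
    · rintro ⟨y, rfl⟩
      have := congrArg (fun k => k.hom y) w
      exact this
  refine ⟨fun U hU => ?_, fun T hT => ?_⟩
  · constructor
    · rintro ⟨S, hS, I, ⟨-, hI, -⟩, T, ⟨hT, t, ht, -⟩, E, f, g, hf, hg, hex, hns, -⟩
      have hfg := exact_of f g hex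
      refine le_sInf ?_
      rintro _ ⟨n, rfl, hn⟩
      have hfi := (ModuleCat.mono_iff_injective _).1 hf
      have hgs := (ModuleCat.epi_iff_surjective _).1 hg
      have hts := (ModuleCat.epi_iff_surjective _).1 ht
      have hIm : Module.Injective A I := (Module.injective_iff_injective_object _ _).2 hI
      cases hn with
      | zero M h =>
        exfalso
        exact hns ⟨Projective.factorThru (𝟙 U) g, Projective.factorThru_comp _ _⟩
      | succ n M Q q hQ hq h =>
        cases h with
        | zero _ h =>
          exfalso
          have : Module.Projective A Q := (IsProjective.iff_projective _).2 hQ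
          have : Module.Projective A (LinearMap.ker q.hom) :=
            (IsProjective.iff_projective _).2 (Projective.of_iso (ModuleCat.kernelIsoKer q) h)
          obtain ⟨s, hs⟩ := NakAux.split_of_pd f.hom hfi g.hom hgs hfg q.hom
            ((ModuleCat.epi_iff_surjective _).1 hq) hIm t.hom hts
          exact hns ⟨ModuleCat.ofHom s, by ext x; exact hs x⟩
        | succ n _ _ _ _ _ _ =>
          norm_cast; omega
    · intro hpd
      have h1 : ¬ ProjDimLE A 1 U := by
        intro h
        have : projDim A U ≤ ((1 : ℕ) : ℕ∞) := sInf_le ⟨1, rfl, h⟩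
        have h2 := hpd.trans this
        norm_cast at h2
      obtain ⟨S, _, _, hS, I, _, _, hI, T, _, _, hT, E, _, _, ι, t, f, g, hIU, hEU, hι, hts,
        hfi, hgs, hfg⟩ := NakAux.psi_rev hNak U (fun P _ _ _ π hπ hk => h1
          (ProjDimLE.succ 0 U (ModuleCat.of A P) (ModuleCat.ofHom π)
            ((IsProjective.iff_projective _).1 ‹_›) ((ModuleCat.epi_iff_surjective _).2 hπ)
            (ProjDimLE.zero _ (Projective.of_iso (ModuleCat.kernelIsoKer (ModuleCat.ofHom π)).symm
              ((IsProjective.iff_projective _).1 hk)))))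
      have : Nontrivial S := IsSimpleModule.nontrivial A S
      have : Nontrivial T := IsSimpleModule.nontrivial A T
      refine ⟨ModuleCat.of A S, hS, ModuleCat.of A I, ⟨ModuleCat.ofHom ι, ?_, ?_, ?_⟩,
        ModuleCat.of A T, ⟨hT, ModuleCat.ofHom t, ?_, ?_⟩, ?_⟩
      · exact (Module.injective_iff_injective_object _ _).1 hI
      · exact (ModuleCat.mono_iff_injective _).2 hι
      · intro N k hk
        exact (ModuleCat.mono_iff_injective _).2
          (hIU.inj_of_comp ι k.hom ((ModuleCat.mono_iff_injective _).1 hk))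
      · exact (ModuleCat.epi_iff_surjective _).2 hts
      · intro N k hk
        exact (ModuleCat.epi_iff_surjective _).2
          (hIU.surj_of_comp t k.hom ((ModuleCat.epi_iff_surjective _).1 hk))
      · exact NakAux.isTau hNak f hfi g hgs hfg hEU
  · constructor
    · rintro ⟨S, hS, P, ⟨-, hP, -⟩, U, ⟨hU, u, hu, -⟩, E, f, g, hf, hg, hex, hns, -⟩
      have hfg := exact_of f g hex
      refine le_sInf ?_
      rintro _ ⟨n, rfl, hn⟩
      have hfi := (ModuleCat.mono_iff_injective _).1 hf
      have hgs := (ModuleCat.epi_iff_surjective _).1 hg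
      have hui := (ModuleCat.mono_iff_injective _).1 hu
      have hPm : Module.Projective A P := (IsProjective.iff_projective _).2 hP
      have main : ∀ (I : ModuleCat.{0} A) (i : T ⟶ I), Injective I → Mono i →
          Injective (cokernel i) → False := by
        intro I i hI hi hC
        have hIm : Module.Injective A I := (Module.injective_iff_injective_object _ _).2 hI
        have hCm : Module.Injective A (I ⧸ LinearMap.range i.hom) :=
          (Module.injective_iff_injective_object _ _).2
            (Injective.of_iso (ModuleCat.cokernelIsoRangeQuotient i) hC)
        obtain ⟨s, hs⟩ := NakAux.split_of_id f.hom hfi g.hom hgs hfg hIm i.hom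
          ((ModuleCat.mono_iff_injective _).1 hi) hCm (LinearMap.range i.hom).mkQ
          (Submodule.mkQ_surjective _) (fun x => by
            simp only [Submodule.mkQ_apply, Submodule.Quotient.mk_eq_zero]; rfl) u.hom hui
        exact hns ⟨ModuleCat.ofHom s, by ext x; exact hs x⟩
      cases hn with
      | zero M h =>
        exfalso
        exact main T (𝟙 T) h inferInstance
          (Injective.of_iso (cokernel.ofEpi (𝟙 T)).symm inferInstance)
      | succ n M I i hI hi h =>
        cases h with
        | zero _ h => exact (main I i hI hi h).elim
        | succ n _ _ _ _ _ _ =>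
          norm_cast; omega
    · intro hid
      have h1 : ¬ InjDimLE A 1 T := by
        intro h
        have : injDim A T ≤ ((1 : ℕ) : ℕ∞) := sInf_le ⟨1, rfl, h⟩
        have h2 := hid.trans this
        norm_cast at h2
      obtain ⟨S, _, _, hS, P, _, _, hP, U, _, _, hU, E, _, _, ρ, u, f, g, hPU, hEU, hρ, hui,
        hfi, hgs, hfg⟩ := NakAux.gamma_rev hNak T (fun I _ _ i hI hi hk => h1
          (InjDimLE.succ 0 T (ModuleCat.of A I) (ModuleCat.ofHom i)
            ((Module.injective_iff_injective_object _ _).1 hI)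
            ((ModuleCat.mono_iff_injective _).2 hi)
            (InjDimLE.zero _ (Injective.of_iso
              (ModuleCat.cokernelIsoRangeQuotient (ModuleCat.ofHom i)).symm
              ((Module.injective_iff_injective_object _ _).1 hk)))))
      have : Nontrivial S := IsSimpleModule.nontrivial A S
      have : Nontrivial U := IsSimpleModule.nontrivial A U
      refine ⟨ModuleCat.of A S, hS, ModuleCat.of A P, ⟨ModuleCat.ofHom ρ, ?_, ?_, ?_⟩,
        ModuleCat.of A U, ⟨hU, ModuleCat.ofHom u, ?_, ?_⟩, ?_⟩
      · exact (IsProjective.iff_projective _).1 hP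
      · exact (ModuleCat.epi_iff_surjective _).2 hρ
      · intro N k hk
        exact (ModuleCat.epi_iff_surjective _).2
          (hPU.surj_of_comp ρ k.hom ((ModuleCat.epi_iff_surjective _).1 hk))
      · exact (ModuleCat.mono_iff_injective _).2 hui
      · intro N k hk
        exact (ModuleCat.mono_iff_injective _).2
          (hPU.inj_of_comp u k.hom ((ModuleCat.mono_iff_injective _).1 hk))
      · exact NakAux.isTau hNak f hfi g hgs hfg hEU
end
end
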